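/- arXiv:1808.03384 — 2 statements merged into one kernel-verified Lean document; each statement's English description precedes it below -/
import Mathlib

section
/- There exist constants ε₀ ∈ (0,1) and C > 0, depending only on n, κ0, κ1 and C₀, such that for every ε ∈ (0, ε₀) and every harmonic function u on Ω₁ with boundary values φ on Γ₁⁺ and ψ on Γ₁⁻, one has for every x = (x', x_n) ∈ Ω_{1/2}: |∇u(x)| ≤ C·|φ(x') − ψ(x')|/(ε + |x'|²) + C·(‖φ‖_{C²} + ‖ψ‖_{C²} + ‖u‖_{L²(Ω₁)}). -/
/-!
The gradient bound follows from three elementary facts about harmonic functions.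

*Sup bound* (`sup_bound`). Above the maximum of its boundary data, a convex `C²` truncation of `u`
vanishes near the two graphs, so its extension by zero is subharmonic on the whole cylinder
`|x'| < 1`. The mean value inequality on a ball of fixed size then bounds `|u|` over `|x'| < 3/4` by
the data and `‖u‖_{L²}`, uniformly in `ε`. Mean values are taken with the weight `(1 - |y|²)₊`, whose
scale derivative is computed by one integration by parts (`rho_flux`, `mean_le`).

*Linear growth* (`side_bound`). Let `t` be the vertical distance to the graph carrying the datum
`φ`, let `p = ε + |x₀'|²`, and let `M` bound the data and `u`. On the neck
`|x' - x₀'| ≤ √p/4`, whose height is comparable to `p`, the function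
`(a/τ) t (2τ - t) + b |x' - x₀'|²` with `b ~ M/p`, `a ~ |φ(x₀') - ψ(x₀')|/p + M` and
`τ ~ min(p, 1)` is superharmonic and dominates `±(u - φ)` on the boundary of the neck. On the other
graph this uses that `|φ - ψ|` grows from its value at `x₀'` by at most `2M|x' - x₀'|`, which is
absorbed by `Mp + M|x' - x₀'|²/p`. Hence
`|u - φ| ≤ C (|φ(x₀') - ψ(x₀')|/p + M) t` at `x₀`.

*Interior gradient estimate* (`grad_est`). At a point at distance `t` from the nearer graph, a ball
of radius comparable to `t` lies in the region, and on it `u` differs from the constant `φ(x₀')` by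
at most `C (|φ(x₀') - ψ(x₀')|/p + M) t`. Dividing by the radius gives the theorem (`grad_side`).

The two graphs are treated at once through the structure `Side`.
-/

open MeasureTheory Metric Finset

noncomputable section

/-- `ℝ^{n-1}`, the horizontal (tangential) variables `x'`. -/
abbrev Ep (n : ℕ) := EuclideanSpace ℝ (Fin (n - 1))

/-- `ℝ^n = ℝ^{n-1} × ℝ`, points written `x = (x', x_n)`. -/
abbrev Efull (n : ℕ) := Ep n × ℝ

/-- The narrow region `Ω_r`. -/
def Omega (n : ℕ) (ε : ℝ) (h1 h2 : Ep n → ℝ) (r : ℝ) : Set (Efull n) :=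
  {x | ‖x.1‖ < r ∧ -ε/2 + h2 x.1 < x.2 ∧ x.2 < ε/2 + h1 x.1}

/-- Top boundary `Γ_r⁺`. -/
def Gammap (n : ℕ) (ε : ℝ) (h1 : Ep n → ℝ) (r : ℝ) : Set (Efull n) :=
  {x | ‖x.1‖ ≤ r ∧ x.2 = ε/2 + h1 x.1}

/-- Bottom boundary `Γ_r⁻`. -/
def Gammam (n : ℕ) (ε : ℝ) (h2 : Ep n → ℝ) (r : ℝ) : Set (Efull n) :=
  {x | ‖x.1‖ ≤ r ∧ x.2 = -ε/2 + h2 x.1}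

/-- `Ω̂_s(x₀) = {x ∈ Ω_{1/2} : |x' - x₀'| < s}`. -/
def OmegaHat (n : ℕ) (ε : ℝ) (h1 h2 : Ep n → ℝ) (x0 : Efull n) (s : ℝ) : Set (Efull n) :=
  {x | x ∈ Omega n ε h1 h2 (1/2) ∧ ‖x.1 - x0.1‖ < s}

/-- The `n` coordinate directions of `ℝ^{n-1} × ℝ`: the first `n-1` are the horizontal
Euclidean basis vectors, the last is the vertical direction. -/
def dir (n : ℕ) (α : Fin n) : Efull n :=
  if h : (α : ℕ) < n - 1 then (EuclideanSpace.single (⟨(α : ℕ), h⟩ : Fin (n - 1)) 1, (0:ℝ))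
  else (0, 1)

/-- Tangential direction `e_α` for `α ∈ {1, …, n-1}`. -/
def tang (n : ℕ) (α : Fin (n - 1)) : Efull n := (EuclideanSpace.single α 1, (0:ℝ))

/-- Vertical direction `e_n`. -/
def vert (n : ℕ) : Efull n := (0, 1)

/-- Pointwise Laplacian `Δu = Σ_α ∂_α∂_α u`. -/
def lapl (n : ℕ) (u : Efull n → ℝ) (x : Efull n) : ℝ :=
  ∑ α : Fin n, fderiv ℝ (fun y => fderiv ℝ u y (dir n α)) x (dir n α)

/-- The auxiliary function `ū(x', x_n) = (x_n - h2(x') + ε/2)/(ε + h1(x') - h2(x'))`. -/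
def ubar (n : ℕ) (ε : ℝ) (h1 h2 : Ep n → ℝ) (x : Efull n) : ℝ :=
  (x.2 - h2 x.1 + ε/2) / (ε + h1 x.1 - h2 x.1)

/-- The auxiliary function `ũ = φ(x')·ū + ψ(x')·(1 - ū)`. -/
def util (n : ℕ) (ε : ℝ) (h1 h2 φ ψ : Ep n → ℝ) (x : Efull n) : ℝ :=
  φ x.1 * ubar n ε h1 h2 x + ψ x.1 * (1 - ubar n ε h1 h2 x)

/-- `C²`-norm on the closed unit ball: `sup_{|x'| ≤ 1} (|f| + |∇f| + |∇²f|)`. -/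
def C2norm {F : Type*} [NormedAddCommGroup F] [NormedSpace ℝ F] (n : ℕ)
    (f : Ep n → F) : ℝ :=
  ⨆ y : closedBall (0 : Ep n) 1,
    (‖f (y : Ep n)‖ + ‖fderiv ℝ f (y : Ep n)‖ + ‖fderiv ℝ (fderiv ℝ f) (y : Ep n)‖)

/-- `C²(S)`-norm of a function on `ℝ^n`. -/
def C2normOn (n : ℕ) (S : Set (Efull n)) (f : Efull n → ℝ) : ℝ :=
  ⨆ y : S,
    (‖f (y : Efull n)‖ + ‖fderiv ℝ f (y : Efull n)‖ + ‖fderiv ℝ (fderiv ℝ f) (y : Efull n)‖)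

/-- `‖∇f‖_∞ = sup_{|x'| ≤ 1} |∇f(x')|`. -/
def gradSup {F : Type*} [NormedAddCommGroup F] [NormedSpace ℝ F] (n : ℕ) (f : Ep n → F) : ℝ :=
  ⨆ y : closedBall (0 : Ep n) 1, ‖fderiv ℝ f (y : Ep n)‖

/-- `‖∇²f‖_∞ = sup_{|x'| ≤ 1} |∇²f(x')|`. -/
def hessSup {F : Type*} [NormedAddCommGroup F] [NormedSpace ℝ F] (n : ℕ) (f : Ep n → F) : ℝ :=
  ⨆ y : closedBall (0 : Ep n) 1, ‖fderiv ℝ (fderiv ℝ f) (y : Ep n)‖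

/-- The geometric hypotheses on `h1, h2`: `C²` on the closed unit ball, the two graphs
do not touch, flatness at the origin, strict convexity of the gap, and `C²`-bound `κ1`. -/
def HGeom (n : ℕ) (ε κ0 κ1 : ℝ) (h1 h2 : Ep n → ℝ) : Prop :=
  ContDiffOn ℝ 2 h1 (closedBall 0 1) ∧ ContDiffOn ℝ 2 h2 (closedBall 0 1) ∧
  (∀ y : Ep n, ‖y‖ ≤ 1 → -ε/2 + h2 y < ε/2 + h1 y) ∧
  h1 0 = 0 ∧ h2 0 = 0 ∧ fderiv ℝ h1 0 = 0 ∧ fderiv ℝ h2 0 = 0 ∧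
  (∀ v : Ep n, κ0 * ‖v‖^2 ≤ fderiv ℝ (fderiv ℝ (fun y => h1 y - h2 y)) 0 v v) ∧
  C2norm n h1 + C2norm n h2 ≤ κ1

/-- Comparability `(ε + |x'|²)/C₀ ≤ δ(x') ≤ C₀ (ε + |x'|²)`. -/
def DeltaComp (n : ℕ) (ε C₀ : ℝ) (h1 h2 : Ep n → ℝ) : Prop :=
  ∀ y : Ep n, ‖y‖ ≤ 1 →
    (ε + ‖y‖^2) / C₀ ≤ ε + h1 y - h2 y ∧ ε + h1 y - h2 y ≤ C₀ * (ε + ‖y‖^2)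

/-- Hypotheses on the coefficients: `C²`-regularity with total `C²(Ω₁)`-norm at most `κ2`,
boundedness `|A| ≤ Λ`, and the weak ellipticity (Legendre) condition with constant `λ`. -/
def CoeffHyp (n N : ℕ) (ε lam Lam κ2 : ℝ) (h1 h2 : Ep n → ℝ)
    (A : Fin n → Fin n → Fin N → Fin N → Efull n → ℝ)
    (B : Fin n → Fin N → Fin N → Efull n → ℝ)
    (Cc : Fin n → Fin N → Fin N → Efull n → ℝ)
    (Dc : Fin N → Fin N → Efull n → ℝ) : Prop :=
  (∀ α β i j, ContDiffOn ℝ 2 (A α β i j) (Omega n ε h1 h2 1)) ∧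
  (∀ α i j, ContDiffOn ℝ 2 (B α i j) (Omega n ε h1 h2 1)) ∧
  (∀ β i j, ContDiffOn ℝ 2 (Cc β i j) (Omega n ε h1 h2 1)) ∧
  (∀ i j, ContDiffOn ℝ 2 (Dc i j) (Omega n ε h1 h2 1)) ∧
  ((∑ α : Fin n, ∑ β : Fin n, ∑ i : Fin N, ∑ j : Fin N,
      C2normOn n (Omega n ε h1 h2 1) (A α β i j)) +
   (∑ α : Fin n, ∑ i : Fin N, ∑ j : Fin N, C2normOn n (Omega n ε h1 h2 1) (B α i j)) +
   (∑ β : Fin n, ∑ i : Fin N, ∑ j : Fin N, C2normOn n (Omega n ε h1 h2 1) (Cc β i j)) +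
   (∑ i : Fin N, ∑ j : Fin N, C2normOn n (Omega n ε h1 h2 1) (Dc i j)) ≤ κ2) ∧
  (∀ α β i j, ∀ x ∈ Omega n ε h1 h2 1, |A α β i j x| ≤ Lam) ∧
  (∀ ξ : Efull n → EuclideanSpace ℝ (Fin N), ContDiff ℝ (⊤ : ℕ∞) ξ →
    HasCompactSupport ξ → tsupport ξ ⊆ Omega n ε h1 h2 1 →
    lam * ∫ x in Omega n ε h1 h2 1, ‖fderiv ℝ ξ x‖^2 ≤
      ∫ x in Omega n ε h1 h2 1,
        ∑ α : Fin n, ∑ β : Fin n, ∑ i : Fin N, ∑ j : Fin N,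
          A α β i j x * fderiv ℝ ξ x (dir n α) i * fderiv ℝ ξ x (dir n β) j)

/-- `u` is a weak solution of
`∂_α(A^{αβ}_{ij} ∂_β u^j + B^α_{ij} u^j) + C^β_{ij} ∂_β u^j + D_{ij} u^j = 0` in `Ω₁`. -/
def WeakSol (n N : ℕ) (ε : ℝ) (h1 h2 : Ep n → ℝ)
    (A : Fin n → Fin n → Fin N → Fin N → Efull n → ℝ)
    (B : Fin n → Fin N → Fin N → Efull n → ℝ)
    (Cc : Fin n → Fin N → Fin N → Efull n → ℝ)
    (Dc : Fin N → Fin N → Efull n → ℝ)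
    (u : Efull n → EuclideanSpace ℝ (Fin N)) : Prop :=
  ContDiffOn ℝ 1 u (Omega n ε h1 h2 1) ∧
  IntegrableOn (fun x => ‖u x‖^2 + ‖fderiv ℝ u x‖^2) (Omega n ε h1 h2 1) ∧
  ∀ ζ : Efull n → EuclideanSpace ℝ (Fin N), ContDiff ℝ (⊤ : ℕ∞) ζ →
    HasCompactSupport ζ → tsupport ζ ⊆ Omega n ε h1 h2 1 →
    (∫ x in Omega n ε h1 h2 1,
      ((∑ α : Fin n, ∑ i : Fin N,
          ((∑ β : Fin n, ∑ j : Fin N, A α β i j x * fderiv ℝ u x (dir n β) j) +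
            ∑ j : Fin N, B α i j x * u x j) * fderiv ℝ ζ x (dir n α) i) -
        ∑ i : Fin N,
          ((∑ β : Fin n, ∑ j : Fin N, Cc β i j x * fderiv ℝ u x (dir n β) j) +
            ∑ j : Fin N, Dc i j x * u x j) * ζ x i)) = 0

/-- `u` attains the boundary values `(φ, ψ)` on `Γ₁⁺` and `Γ₁⁻`. -/
def AttainsBV {F : Type*} [NormedAddCommGroup F] [NormedSpace ℝ F] (n : ℕ) (ε : ℝ)
    (h1 h2 : Ep n → ℝ) (u : Efull n → F) (φ ψ : Ep n → F) : Prop :=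
  ContinuousOn u (Omega n ε h1 h2 1 ∪ Gammap n ε h1 1 ∪ Gammam n ε h2 1) ∧
  (∀ y : Ep n, ‖y‖ ≤ 1 → u (y, ε/2 + h1 y) = φ y ∧ u (y, -ε/2 + h2 y) = ψ y)

/-- `u` is a harmonic function on `Ω₁` with boundary values `φ` on `Γ₁⁺` and `ψ` on `Γ₁⁻`. -/
def HarmBV (n : ℕ) (ε : ℝ) (h1 h2 : Ep n → ℝ) (u : Efull n → ℝ) (φ ψ : Ep n → ℝ) : Prop :=
  ContDiffOn ℝ 2 u (Omega n ε h1 h2 1) ∧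
  (∀ x ∈ Omega n ε h1 h2 1, lapl n u x = 0) ∧
  IntegrableOn (fun x => ‖u x‖^2 + ‖fderiv ℝ u x‖^2) (Omega n ε h1 h2 1) ∧
  AttainsBV n ε h1 h2 u φ ψ

open Filter Topology

/-! ### Pure second derivatives and the minimum principle -/

section SecondDerivatives

variable {E : Type*} [NormedAddCommGroup E] [NormedSpace ℝ E]

/-- The pure second directional derivative `∂_e∂_e w (x)`. -/
def D2 (w : E → ℝ) (x e : E) : ℝ := fderiv ℝ (fun y => fderiv ℝ w y e) x e

lemma cd_diff {f : E → ℝ} {x : E} (hf : ContDiffAt ℝ 2 f x) : DifferentiableAt ℝ f x :=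
  hf.differentiableAt (by norm_num)

lemma cd_ev {f : E → ℝ} {x : E} (hf : ContDiffAt ℝ 2 f x) :
    ∀ᶠ y in 𝓝 x, DifferentiableAt ℝ f y :=
  (hf.eventually (by simp)).mono fun _ hy => cd_diff hy

lemma cd_fderiv {f : E → ℝ} {x : E} (hf : ContDiffAt ℝ 2 f x) :
    ContDiffAt ℝ 1 (fderiv ℝ f) x :=
  hf.fderiv_right (by norm_num)

lemma cd_dir {f : E → ℝ} {x : E} (hf : ContDiffAt ℝ 2 f x) (e : E) :
    DifferentiableAt ℝ (fun y => fderiv ℝ f y e) x :=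
  ((cd_fderiv hf).clm_apply contDiffAt_const).differentiableAt (by norm_num)

lemma D2_eq {f : E → ℝ} {x : E} (hf : ContDiffAt ℝ 2 f x) (e : E) :
    D2 f x e = fderiv ℝ (fderiv ℝ f) x e e := by
  unfold D2
  have h := (cd_fderiv hf).differentiableAt (by norm_num)
  rw [fderiv_clm_apply h (differentiableAt_const e)]
  simp

lemma D2_congr {f g : E → ℝ} {x : E} (h : f =ᶠ[𝓝 x] g) (e : E) : D2 f x e = D2 g x e := by
  unfold D2
  have : (fun y => fderiv ℝ f y e) =ᶠ[𝓝 x] (fun y => fderiv ℝ g y e) := by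
    filter_upwards [h.fderiv (𝕜 := ℝ)] with y hy
    rw [hy]
  rw [this.fderiv_eq]

lemma D2_add {f g : E → ℝ} {x : E} (hf : ContDiffAt ℝ 2 f x) (hg : ContDiffAt ℝ 2 g x) (e : E) :
    D2 (fun y => f y + g y) x e = D2 f x e + D2 g x e := by
  unfold D2
  have : (fun y => fderiv ℝ (fun y => f y + g y) y e) =ᶠ[𝓝 x]
      (fun y => fderiv ℝ f y e + fderiv ℝ g y e) := by
    filter_upwards [cd_ev hf, cd_ev hg] with y h1 h2
    rw [fderiv_fun_add h1 h2]; rfl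
  rw [this.fderiv_eq, fderiv_fun_add (cd_dir hf e) (cd_dir hg e)]; rfl

lemma D2_mul {f g : E → ℝ} {x : E} (hf : ContDiffAt ℝ 2 f x) (hg : ContDiffAt ℝ 2 g x) (e : E) :
    D2 (fun y => f y * g y) x e =
      f x * D2 g x e + 2 * (fderiv ℝ f x e * fderiv ℝ g x e) + g x * D2 f x e := by
  unfold D2
  have : (fun y => fderiv ℝ (fun y => f y * g y) y e) =ᶠ[𝓝 x]
      (fun y => f y * fderiv ℝ g y e + g y * fderiv ℝ f y e) := by
    filter_upwards [cd_ev hf, cd_ev hg] with y h1 h2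
    rw [fderiv_fun_mul h1 h2]; simp
  rw [this.fderiv_eq, fderiv_fun_add ((cd_diff hf).fun_mul (cd_dir hg e))
    ((cd_diff hg).fun_mul (cd_dir hf e)), fderiv_fun_mul (cd_diff hf) (cd_dir hg e),
    fderiv_fun_mul (cd_diff hg) (cd_dir hf e)]
  simp
  ring

lemma D2_const (c : ℝ) (x e : E) : D2 (fun _ : E => c) x e = 0 := by
  unfold D2; simp

lemma D2_const_mul {f : E → ℝ} {x : E} (hf : ContDiffAt ℝ 2 f x) (c : ℝ) (e : E) :
    D2 (fun y => c * f y) x e = c * D2 f x e := by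
  rw [D2_mul contDiffAt_const hf, D2_const]; simp

lemma D2_clm (A : E →L[ℝ] ℝ) (x e : E) : D2 (fun y => A y) x e = 0 := by
  unfold D2
  have : (fun y => fderiv ℝ (fun y => A y) y e) = fun _ => A e := by
    funext y; rw [A.fderiv]
  rw [this]; simp

/-- Chain rule for an outer function with prescribed first two derivatives. -/
lemma D2_comp {f : E → ℝ} {x : E} (hf : ContDiffAt ℝ 2 f x) {G G1 G2 : ℝ → ℝ}
    (hG : ∀ s, HasDerivAt G (G1 s) s) (hG1 : ∀ s, HasDerivAt G1 (G2 s) s) (e : E) :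
    D2 (fun y => G (f y)) x e = G2 (f x) * (fderiv ℝ f x e) ^ 2 + G1 (f x) * D2 f x e := by
  unfold D2
  have : (fun y => fderiv ℝ (fun y => G (f y)) y e) =ᶠ[𝓝 x]
      (fun y => G1 (f y) * fderiv ℝ f y e) := by
    filter_upwards [cd_ev hf] with y h1
    have := ((hG (f y)).comp_hasFDerivAt y h1.hasFDerivAt).fderiv
    simp only [Function.comp_def] at this
    rw [this]; simp
  have h1 := ((hG1 (f x)).comp_hasFDerivAt x (cd_diff hf).hasFDerivAt)
  simp only [Function.comp_def] at h1
  rw [this.fderiv_eq, fderiv_fun_mul h1.differentiableAt (cd_dir hf e), h1.fderiv]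
  simp
  ring

/-- Pull-back of a function of one factor under the first projection. -/
lemma D2_fst {F : Type*} [NormedAddCommGroup F] [NormedSpace ℝ F] {f : E → ℝ} {x : E × F}
    (hf : ContDiffAt ℝ 2 f x.1) (e : E × F) :
    D2 (fun y : E × F => f y.1) x e = D2 f x.1 e.1 := by
  unfold D2
  have h0 : ∀ᶠ y in 𝓝 x, DifferentiableAt ℝ f y.1 :=
    (continuous_fst.tendsto x).eventually (cd_ev hf)
  have : (fun y : E × F => fderiv ℝ (fun y : E × F => f y.1) y e) =ᶠ[𝓝 x]
      (fun y => (fun z => fderiv ℝ f z e.1) y.1) := by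
    filter_upwards [h0] with y h1
    have := (h1.hasFDerivAt.comp y hasFDerivAt_fst).fderiv
    simp only [Function.comp_def] at this
    rw [this]; simp
  rw [this.fderiv_eq]
  have := ((cd_dir hf e.1).hasFDerivAt.comp x hasFDerivAt_fst).fderiv
  simp only [Function.comp_def] at this
  rw [this]; simp

lemma fderiv_fst_comp {F : Type*} [NormedAddCommGroup F] [NormedSpace ℝ F] {f : E → ℝ} {x : E × F}
    (hf : DifferentiableAt ℝ f x.1) (e : E × F) :
    fderiv ℝ (fun y : E × F => f y.1) x e = fderiv ℝ f x.1 e.1 := by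
  have := (hf.hasFDerivAt.comp x hasFDerivAt_fst).fderiv
  simp only [Function.comp_def] at this
  rw [this]; simp

/-- Second-order necessary condition at an interior minimum. -/
lemma D2_nonneg_of_isLocalMin {w : E → ℝ} {x : E} (hw : ContDiffAt ℝ 2 w x)
    (hmin : IsLocalMin w x) (e : E) : 0 ≤ D2 w x e := by
  by_contra hneg
  push Not at hneg
  set L : ℝ → E := fun s => x + s • e with hL
  have hLd : ∀ s, HasDerivAt L e s := fun s => by
    have h := ((hasDerivAt_id s).smul_const e).const_add x
    rw [one_smul] at h
    exact h
  have hL0 : L 0 = x := by simp [hL]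
  have hLt : Tendsto L (𝓝 0) (𝓝 x) := by
    have := (hLd 0).continuousAt.tendsto
    rwa [hL0] at this
  set g : ℝ → ℝ := fun s => w (L s) with hg
  have hgd : ∀ᶠ s in 𝓝 (0:ℝ), HasDerivAt g (fderiv ℝ w (L s) e) s := by
    filter_upwards [hLt.eventually (cd_ev hw)] with s hs
    exact hs.hasFDerivAt.comp_hasDerivAt s (hLd s)
  have hder : deriv g =ᶠ[𝓝 0] fun s => fderiv ℝ w (L s) e := hgd.mono fun s hs => hs.deriv
  have hd2 : HasDerivAt (fun s => fderiv ℝ w (L s) e) (D2 w x e) 0 := by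
    have h1 : HasFDerivAt (fun y => fderiv ℝ w y e)
        (fderiv ℝ (fun y => fderiv ℝ w y e) x) (L 0) := by
      rw [hL0]; exact (cd_dir hw e).hasFDerivAt
    exact h1.comp_hasDerivAt 0 (hLd 0)
  have hdd : deriv (deriv g) 0 = D2 w x e := by
    rw [hder.deriv_eq, hd2.deriv]
  have hgmin : IsLocalMin g 0 := by
    have : ∀ᶠ s in 𝓝 (0:ℝ), w x ≤ w (L s) := hLt.eventually hmin
    filter_upwards [this] with s hs
    simpa [hg, hL0] using hs
  have hgmax : IsLocalMax g 0 :=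
    isLocalMax_of_deriv_deriv_neg (by rw [hdd]; exact hneg) hgmin.deriv_eq_zero
      hgd.self_of_nhds.continuousAt
  have hconst : g =ᶠ[𝓝 0] fun _ => g 0 := by
    filter_upwards [hgmin, hgmax] with s h1 h2
    exact le_antisymm h2 h1
  have hd0 : deriv g =ᶠ[𝓝 0] fun _ => 0 := by
    filter_upwards [hconst.deriv] with s hs
    rw [hs]; simp
  have : deriv (deriv g) 0 = 0 := by rw [hd0.deriv_eq]; simp
  rw [hdd] at this
  exact absurd this hneg.ne

end SecondDerivatives

/-- Weak minimum principle on a set `K` split into an interior part `D` and a boundary part. -/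
lemma min_principle {n : ℕ} {K D : Set (Efull n)} (hK : IsCompact K) (hD : IsOpen D)
    (hDK : D ⊆ K) {w : Efull n → ℝ} (hc : ContinuousOn w K)
    (hw : ∀ x ∈ D, ContDiffAt ℝ 2 w x) (hlap : ∀ x ∈ D, lapl n w x < 0)
    (hb : ∀ x ∈ K, x ∉ D → 0 ≤ w x) : ∀ x ∈ K, 0 ≤ w x := by
  intro x hx
  obtain ⟨z, hz, hmin⟩ := hK.exists_isMinOn ⟨x, hx⟩ hc
  by_cases hzD : z ∈ D
  · exfalso
    have hloc : IsLocalMin w z := by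
      filter_upwards [hD.mem_nhds hzD] with y hy
      exact hmin (hDK hy)
    have : 0 ≤ lapl n w z :=
      Finset.sum_nonneg fun α _ => D2_nonneg_of_isLocalMin (hw z hzD) hloc (dir n α)
    exact absurd (hlap z hzD) (not_lt.2 this)
  · exact (hb z hz hzD).trans (hmin hx)

/-! ### The `C²`-norm on the closed ball -/

section C2norm

/-- The supremum defining `C2norm` is finite. At boundary points of the ball `fderiv` is a
two-sided derivative (or the junk value `0`); where it exists it agrees with the derivative within
the closed ball, which is continuous up to the boundary. -/
lemma C2norm_bdd {n : ℕ} {f : Ep n → ℝ} (hf : ContDiffOn ℝ 2 f (closedBall 0 1)) :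
    BddAbove (Set.range fun y : closedBall (0 : Ep n) 1 =>
      ‖f (y : Ep n)‖ + ‖fderiv ℝ f (y : Ep n)‖ + ‖fderiv ℝ (fderiv ℝ f) (y : Ep n)‖) := by
  set s : Set (Ep n) := closedBall 0 1 with hs
  have hus : UniqueDiffOn ℝ s := by
    refine uniqueDiffOn_convex (convex_closedBall 0 1) ?_
    exact ⟨0, ball_subset_interior_closedBall (by simp)⟩
  have hcomp : IsCompact s := isCompact_closedBall 0 1
  set g := fderivWithin ℝ f s with hg
  have hg1 : ContDiffOn ℝ 1 g s := hf.fderivWithin hus (by norm_num)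
  have hg2 : ContinuousOn (fderivWithin ℝ g s) s :=
    hg1.continuousOn_fderivWithin hus (by norm_num)
  obtain ⟨B0, hB0⟩ := hcomp.exists_bound_of_continuousOn hf.continuousOn
  obtain ⟨B1, hB1⟩ := hcomp.exists_bound_of_continuousOn hg1.continuousOn
  obtain ⟨B2, hB2⟩ := hcomp.exists_bound_of_continuousOn (E := Ep n →L[ℝ] Ep n →L[ℝ] ℝ) hg2
  refine ⟨B0 + B1 + B2, ?_⟩
  rintro _ ⟨⟨y, hy⟩, rfl⟩
  refine add_le_add (add_le_add (hB0 y hy) ?_) ?_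
  · by_cases hd : DifferentiableAt ℝ f y
    · show ‖fderiv ℝ f y‖ ≤ B1
      rw [← hd.fderivWithin (hus y hy)]; exact hB1 y hy
    · show ‖fderiv ℝ f y‖ ≤ B1
      rw [fderiv_zero_of_not_differentiableAt hd, norm_zero]
      exact (norm_nonneg _).trans (hB1 y hy)
  · show ‖fderiv ℝ (fderiv ℝ f) y‖ ≤ B2
    by_cases hd : DifferentiableAt ℝ (fderiv ℝ f) y
    · have hyc : y ∈ closure (ball (0 : Ep n) 1) := by
        rw [closure_ball _ one_ne_zero]; exact hy
      have hsub : ball (0 : Ep n) 1 ⊆ s := ball_subset_closedBall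
      have heq : ∀ z ∈ ball (0 : Ep n) 1, g z = fderiv ℝ f z := fun z hz =>
        fderivWithin_of_mem_nhds (closedBall_mem_nhds_of_mem hz)
      have : (𝓝[ball (0 : Ep n) 1] y).NeBot := mem_closure_iff_nhdsWithin_neBot.1 hyc
      have hgy : g y = fderiv ℝ f y := by
        have t1 : Tendsto g (𝓝[ball (0 : Ep n) 1] y) (𝓝 (g y)) :=
          ((hg1.continuousOn y hy).mono hsub)
        have t2 : Tendsto (fderiv ℝ f) (𝓝[ball (0 : Ep n) 1] y) (𝓝 (fderiv ℝ f y)) :=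
          hd.continuousAt.tendsto.mono_left nhdsWithin_le_nhds
        refine tendsto_nhds_unique t1 (t2.congr' ?_)
        filter_upwards [self_mem_nhdsWithin] with z hz
        exact (heq z hz).symm
      have h1 : HasFDerivWithinAt g (fderiv ℝ (fderiv ℝ f) y) (ball (0 : Ep n) 1) y :=
        hd.hasFDerivAt.hasFDerivWithinAt.congr heq hgy
      have h2 : HasFDerivWithinAt g (fderivWithin ℝ g s y) (ball (0 : Ep n) 1) y :=
        ((hg1.differentiableOn (by norm_num) y hy).hasFDerivWithinAt).mono hsub
      have hu : UniqueDiffWithinAt ℝ (ball (0 : Ep n) 1) y :=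
        uniqueDiffWithinAt_convex (convex_ball 0 1)
          (by rw [isOpen_ball.interior_eq]; exact ⟨0, by simp⟩) hyc
      rw [hu.eq h1 h2]
      exact hB2 y hy
    · rw [fderiv_zero_of_not_differentiableAt hd]
      exact (norm_zero (E := Ep n →L[ℝ] Ep n →L[ℝ] ℝ)).trans_le
        ((norm_nonneg (E := Ep n →L[ℝ] Ep n →L[ℝ] ℝ) _).trans (hB2 y hy))

lemma C2norm_ge {n : ℕ} {f : Ep n → ℝ} (hf : ContDiffOn ℝ 2 f (closedBall 0 1)) {y : Ep n}
    (hy : ‖y‖ ≤ 1) :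
    ‖f y‖ + ‖fderiv ℝ f y‖ + ‖fderiv ℝ (fderiv ℝ f) y‖ ≤ C2norm n f :=
  le_ciSup (C2norm_bdd hf) (⟨y, by simpa using hy⟩ : closedBall (0 : Ep n) 1)

/-- `f` is `C²` on the open unit ball, continuous on the closed one, and `f, ∇f, ∇²f` are bounded
by `M`; this is all that is used of a bound `‖f‖_{C²} ≤ M`. -/
structure C2le (n : ℕ) (f : Ep n → ℝ) (M : ℝ) : Prop where
  cd : ∀ y : Ep n, ‖y‖ < 1 → ContDiffAt ℝ 2 f y
  cont : ContinuousOn f (closedBall 0 1)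
  b0 : ∀ y : Ep n, ‖y‖ ≤ 1 → |f y| ≤ M
  b1 : ∀ y : Ep n, ‖y‖ < 1 → ‖fderiv ℝ f y‖ ≤ M
  b2 : ∀ y : Ep n, ‖y‖ < 1 → ‖fderiv ℝ (fderiv ℝ f) y‖ ≤ M

lemma C2norm_nonneg {n : ℕ} (f : Ep n → ℝ) : 0 ≤ C2norm n f :=
  Real.iSup_nonneg fun _ => by positivity

lemma C2le_of {n : ℕ} {f : Ep n → ℝ} (hf : ContDiffOn ℝ 2 f (closedBall 0 1)) {M : ℝ}
    (hM : C2norm n f ≤ M) : C2le n f M where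
  cd y hy := hf.contDiffAt (closedBall_mem_nhds_of_mem (by simpa using hy))
  cont := hf.continuousOn
  b0 y hy := by
    have := C2norm_ge hf hy
    rw [← Real.norm_eq_abs]
    linarith [norm_nonneg (fderiv ℝ f y), norm_nonneg (fderiv ℝ (fderiv ℝ f) y)]
  b1 y hy := by
    have := C2norm_ge hf hy.le
    linarith [norm_nonneg (f y), norm_nonneg (fderiv ℝ (fderiv ℝ f) y)]
  b2 y hy := by
    have := C2norm_ge hf hy.le
    linarith [norm_nonneg (f y), norm_nonneg (fderiv ℝ f y)]

variable {n : ℕ} {f : Ep n → ℝ} {M : ℝ}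

lemma C2le.lip (hf : C2le n f M) {y z : Ep n} (hy : ‖y‖ < 1) (hz : ‖z‖ < 1) :
    |f y - f z| ≤ M * ‖y - z‖ := by
  have := (convex_ball (0 : Ep n) 1).norm_image_sub_le_of_norm_fderiv_le (𝕜 := ℝ) (f := f) (C := M)
    (fun x hx => cd_diff (hf.cd x (by simpa using hx)))
    (fun x hx => hf.b1 x (by simpa using hx))
    (show z ∈ ball (0 : Ep n) 1 by simpa using hz) (show y ∈ ball (0 : Ep n) 1 by simpa using hy)
  simpa using this

lemma C2le.neg (hf : C2le n f M) : C2le n (fun y => - f y) M where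
  cd y hy := (hf.cd y hy).neg
  cont := hf.cont.neg
  b0 y hy := by rw [abs_neg]; exact hf.b0 y hy
  b1 y hy := by rw [fderiv_fun_neg, norm_neg]; exact hf.b1 y hy
  b2 y hy := by
    have : fderiv ℝ (fun y => - f y) = fun y => - fderiv ℝ f y := by
      funext z; rw [fderiv_fun_neg]
    rw [this, fderiv_fun_neg]
    exact (norm_neg (E := Ep n →L[ℝ] Ep n →L[ℝ] ℝ) _).trans_le (hf.b2 y hy)

lemma C2le.D2_abs (hf : C2le n f M) {y : Ep n} (hy : ‖y‖ < 1) {e : Ep n} (he : ‖e‖ ≤ 1) :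
    |D2 f y e| ≤ M := by
  rw [D2_eq (hf.cd y hy), ← Real.norm_eq_abs]
  have hM := hf.b2 y hy
  have hM0 : 0 ≤ M := (norm_nonneg (E := Ep n →L[ℝ] Ep n →L[ℝ] ℝ) _).trans hM
  calc ‖fderiv ℝ (fderiv ℝ f) y e e‖ ≤ ‖fderiv ℝ (fderiv ℝ f) y e‖ * ‖e‖ :=
        ContinuousLinearMap.le_opNorm _ _
    _ ≤ (‖fderiv ℝ (fderiv ℝ f) y‖ * ‖e‖) * ‖e‖ := by
        gcongr; exact ContinuousLinearMap.le_opNorm _ _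
    _ ≤ (M * 1) * 1 := by gcongr
    _ = M := by ring

end C2norm

/-! ### The coordinate frame -/

section Directions

lemma dir_fst_norm (n : ℕ) (α : Fin n) : ‖(dir n α).1‖ ≤ 1 := by
  unfold dir
  split_ifs <;> simp

lemma exists_dir_vert {n : ℕ} (hn : 2 ≤ n) : ∃ α : Fin n, dir n α = (0, 1) :=
  ⟨⟨n - 1, by omega⟩, by simp [dir]⟩

/-- Coordinates of a vector relative to the frame `dir`. -/
def coord (n : ℕ) (y : Efull n) (α : Fin n) : ℝ :=
  if h : (α : ℕ) < n - 1 then y.1 ⟨α, h⟩ else y.2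

lemma sum_single {m : ℕ} (z : EuclideanSpace ℝ (Fin m)) :
    ∑ i, z i • (EuclideanSpace.single i (1:ℝ) : EuclideanSpace ℝ (Fin m)) = z := by
  simpa using (EuclideanSpace.basisFun (Fin m) ℝ).sum_repr z

lemma sum_coord_dir {n : ℕ} (hn : 2 ≤ n) (y : Efull n) : ∑ α, coord n y α • dir n α = y := by
  obtain ⟨m, rfl⟩ : ∃ m, n = m + 1 := ⟨n - 1, by omega⟩
  rw [Fin.sum_univ_castSucc]
  have h1 : ∀ i : Fin m, coord (m + 1) y i.castSucc • dir (m + 1) i.castSucc =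
      (y.1 i • (EuclideanSpace.single i (1:ℝ) : Ep (m + 1)), (0:ℝ)) := by
    intro i
    simp [coord, dir]
  have h2 : coord (m + 1) y (Fin.last m) • dir (m + 1) (Fin.last m) = ((0 : Ep (m + 1)), y.2) := by
    simp [coord, dir]
  rw [h2, Finset.sum_congr rfl fun i _ => h1 i]
  refine Prod.ext ?_ ?_
  · simp only [Prod.fst_add, Prod.fst_sum, add_zero]
    exact sum_single y.1
  · simp only [Prod.snd_add, Prod.snd_sum]; simp

/-- The squared Euclidean norm on `ℝ^{n-1} × ℝ` (whose built-in norm is the maximum norm). -/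
def eucSq (n : ℕ) (y : Efull n) : ℝ := ‖y.1‖ ^ 2 + y.2 ^ 2

lemma eucSq_contDiff (n : ℕ) : ContDiff ℝ 2 (eucSq n) := by
  unfold eucSq
  exact (contDiff_fst.norm_sq ℝ).add (contDiff_snd.pow 2)

lemma fderiv_eucSq {n : ℕ} (y e : Efull n) :
    fderiv ℝ (eucSq n) y e = 2 * (inner ℝ y.1 e.1 + y.2 * e.2) := by
  have h1 : HasFDerivAt (fun y : Efull n => ‖y.1‖ ^ 2) _ y :=
    (hasFDerivAt_fst (𝕜 := ℝ) (p := y)).norm_sq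
  have h2 : HasFDerivAt (fun y : Efull n => y.2 ^ 2) _ y :=
    (hasFDerivAt_snd (𝕜 := ℝ) (p := y)).pow 2
  have := (h1.add h2).fderiv
  have h3 : fderiv ℝ (eucSq n) y = _ := this
  rw [h3]
  simp
  ring

lemma fderiv_eucSq_dir {n : ℕ} (y : Efull n) (α : Fin n) :
    fderiv ℝ (eucSq n) y (dir n α) = 2 * coord n y α := by
  rw [fderiv_eucSq]
  unfold dir coord
  split_ifs <;> simp [EuclideanSpace.inner_single_right]

/-- `∂_e∂_e |x' - c|² = 2|e|²`. -/
lemma D2_normSq {F : Type*} [NormedAddCommGroup F] [InnerProductSpace ℝ F] (c y e : F) :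
    D2 (fun y : F => ‖y - c‖ ^ 2) y e = 2 * ‖e‖ ^ 2 := by
  unfold D2
  have : (fun z => fderiv ℝ (fun y : F => ‖y - c‖ ^ 2) z e) = fun z => 2 * inner ℝ (z - c) e := by
    funext z
    have := ((hasFDerivAt_id (𝕜 := ℝ) z).sub_const c).norm_sq.fderiv
    simp only [id] at this
    rw [this]; simp [inner_sub_left]
  rw [this]
  have h : HasFDerivAt (fun z : F => 2 * inner ℝ (z - c) e) _ y :=
    ((((hasFDerivAt_id (𝕜 := ℝ) y).sub_const c).inner ℝ (hasFDerivAt_const e y)).const_mul 2)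
  rw [h.fderiv]
  simp

end Directions

/-! ### A weighted mean value inequality -/

section MeanValue

instance volume_isAddHaar (n : ℕ) : (volume : Measure (Efull n)).IsAddHaarMeasure :=
  inferInstanceAs (Measure.IsAddHaarMeasure
    ((volume : Measure (Ep n)).prod (volume : Measure ℝ)))

/-- The radial weight `(1 - |y|²)₊`. -/
def rho (n : ℕ) (y : Efull n) : ℝ := max (1 - eucSq n y) 0

lemma rho_continuous (n : ℕ) : Continuous (rho n) :=
  (continuous_const.sub (eucSq_contDiff n).continuous).max continuous_const

lemma rho_nonneg {n : ℕ} (y : Efull n) : 0 ≤ rho n y := le_max_right _ _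

lemma rho_le_one {n : ℕ} (y : Efull n) : rho n y ≤ 1 := by
  unfold rho eucSq
  refine max_le ?_ zero_le_one
  nlinarith [sq_nonneg ‖y.1‖, sq_nonneg y.2]

lemma norm_lt_one_of_rho_ne {n : ℕ} {y : Efull n} (h : rho n y ≠ 0) : ‖y‖ < 1 := by
  have h1 : eucSq n y < 1 := by
    by_contra hc
    push Not at hc
    exact h (max_eq_right (by linarith))
  unfold eucSq at h1
  rw [Prod.norm_def, max_lt_iff, Real.norm_eq_abs]
  constructor
  · nlinarith [sq_nonneg y.2, norm_nonneg y.1]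
  · nlinarith [sq_nonneg ‖y.1‖, abs_nonneg y.2, sq_abs y.2]

lemma rho_eq_zero {n : ℕ} {y : Efull n} (h : 1 ≤ ‖y‖) : rho n y = 0 := by
  by_contra hc
  exact absurd (norm_lt_one_of_rho_ne hc) (not_lt.2 h)

lemma rho_hasCompactSupport (n : ℕ) : HasCompactSupport (rho n) :=
  HasCompactSupport.intro (isCompact_closedBall (0 : Efull n) 1) fun y hy =>
    rho_eq_zero (by
      have : ¬ ‖y‖ ≤ 1 := by simpa using hy
      linarith)

lemma rho_integrable (n : ℕ) : Integrable (rho n) :=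
  (rho_continuous n).integrable_of_hasCompactSupport (rho_hasCompactSupport n)

lemma rho_integral_pos (n : ℕ) : 0 < ∫ y, rho n y := by
  refine (rho_continuous n).integral_pos_of_hasCompactSupport_nonneg_nonzero
    (rho_hasCompactSupport n) rho_nonneg (x := 0) ?_
  simp [rho, eucSq]

lemma hasDerivAt_posPart_sq (s : ℝ) :
    HasDerivAt (fun s : ℝ => (max s 0) ^ 2) (2 * max s 0) s := by
  rcases lt_trichotomy s 0 with h | h | h
  · rw [max_eq_right h.le, mul_zero]
    refine (hasDerivAt_const s (0:ℝ)).congr_of_eventuallyEq ?_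
    filter_upwards [gt_mem_nhds h] with t ht
    simp [max_eq_right ht.le]
  · subst h
    rw [hasDerivAt_iff_isLittleO_nhds_zero]
    simp only [zero_add, max_self, mul_zero, smul_zero, sub_zero]
    have h1 : (fun h : ℝ => (max h 0) ^ 2 - 0 ^ 2) =O[𝓝 0] fun h : ℝ => h ^ 2 := by
      refine Asymptotics.IsBigO.of_bound 1 (Eventually.of_forall fun t => ?_)
      rcases le_total t 0 with ht | ht <;> simp [ht, sq_nonneg]
    exact h1.trans_isLittleO (Asymptotics.isLittleO_pow_id one_lt_two)
  · rw [max_eq_left h.le]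
    have h1 := hasDerivAt_pow 2 s
    simp only [Nat.cast_ofNat, Nat.add_one_sub_one, pow_one] at h1
    refine h1.congr_of_eventuallyEq ?_
    filter_upwards [lt_mem_nhds h] with t ht
    simp [max_eq_left ht.le]

/-- The potential of the weight: `∇(ρ²/4) = -ρ y`. -/
def pot (n : ℕ) (y : Efull n) : ℝ := (rho n y) ^ 2 / 4

lemma pot_hasFDerivAt {n : ℕ} (y : Efull n) :
    HasFDerivAt (pot n) (-((rho n y / 2) • fderiv ℝ (eucSq n) y)) y := by
  have h0 : HasFDerivAt (fun y => 1 - eucSq n y) (-(fderiv ℝ (eucSq n) y)) y :=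
    (((eucSq_contDiff n).differentiable (by norm_num) y).hasFDerivAt).const_sub 1
  have h1 := ((hasDerivAt_posPart_sq (1 - eucSq n y)).div_const 4).comp_hasFDerivAt y h0
  refine h1.congr_fderiv ?_
  rw [smul_neg, rho]
  congr 2
  ring

lemma pot_fderiv_dir {n : ℕ} (y : Efull n) (α : Fin n) :
    fderiv ℝ (pot n) y (dir n α) = -(rho n y * coord n y α) := by
  rw [(pot_hasFDerivAt y).fderiv]
  simp [fderiv_eucSq_dir]
  ring

lemma pot_nonneg {n : ℕ} (y : Efull n) : 0 ≤ pot n y := by unfold pot; positivity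

lemma pot_continuous (n : ℕ) : Continuous (pot n) := ((rho_continuous n).pow 2).div_const 4

lemma coord_continuous (n : ℕ) (α : Fin n) : Continuous fun y => coord n y α := by
  unfold coord
  split_ifs <;> fun_prop

lemma rho_mul_integrable {n : ℕ} {g : Efull n → ℝ} (hg : Continuous g) :
    Integrable fun y => rho n y * g y :=
  ((rho_continuous n).mul hg).integrable_of_hasCompactSupport (rho_hasCompactSupport n).mul_right

lemma pot_hasCompactSupport (n : ℕ) : HasCompactSupport (pot n) :=
  (rho_hasCompactSupport n).comp_left (g := fun t : ℝ => t ^ 2 / 4) (by simp)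

lemma pot_mul_integrable {n : ℕ} {g : Efull n → ℝ} (hg : Continuous g) :
    Integrable fun y => pot n y * g y :=
  ((pot_continuous n).mul hg).integrable_of_hasCompactSupport (pot_hasCompactSupport n).mul_right

/-- Integration by parts based on `ρ y = -∇(ρ²/4)`. The left-hand side is the derivative at `r` of
the weighted mean `∫ ρ f(x₀ + r·)`. -/
lemma rho_flux {n : ℕ} (hn : 2 ≤ n) {f : Efull n → ℝ} (hf : ContDiff ℝ 2 f) (x0 : Efull n)
    (r : ℝ) : ∫ y, rho n y * fderiv ℝ f (x0 + r • y) y =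
      r * ∫ y, pot n y * lapl n f (x0 + r • y) := by
  have hf1 : ContDiff ℝ 1 (fderiv ℝ f) := hf.fderiv_right (by norm_num)
  have hA : ContDiff ℝ 1 fun y : Efull n => x0 + r • y := by fun_prop
  have hg : ∀ α : Fin n, ContDiff ℝ 1 fun y => fderiv ℝ f (x0 + r • y) (dir n α) := fun α =>
    (hf1.comp hA).clm_apply contDiff_const
  have hgd : ∀ (α : Fin n) (y : Efull n),
      fderiv ℝ (fun y => fderiv ℝ f (x0 + r • y) (dir n α)) y (dir n α) =
        r * D2 f (x0 + r • y) (dir n α) := by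
    intro α y
    have h1 : HasFDerivAt (fun z => fderiv ℝ f z (dir n α)) _ (x0 + r • y) :=
      (cd_dir hf.contDiffAt (dir n α)).hasFDerivAt
    have h2 : HasFDerivAt (fun y : Efull n => x0 + r • y) (r • ContinuousLinearMap.id ℝ _) y :=
      ((hasFDerivAt_id y).const_smul r).const_add x0
    have := (h1.comp y h2).fderiv
    simp only [Function.comp_def] at this
    rw [this]
    simp [D2]
  have key : ∀ α : Fin n, ∫ y, pot n y * (r * D2 f (x0 + r • y) (dir n α)) =
      ∫ y, rho n y * (coord n y α * fderiv ℝ f (x0 + r • y) (dir n α)) := by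
    intro α
    have hc : Continuous fun y =>
        fderiv ℝ (fun y => fderiv ℝ f (x0 + r • y) (dir n α)) y (dir n α) :=
      ((hg α).continuous_fderiv (by norm_num)).clm_apply continuous_const
    have ibp := integral_mul_fderiv_eq_neg_fderiv_mul_of_integrable (μ := volume)
      (f := pot n) (g := fun y => fderiv ℝ f (x0 + r • y) (dir n α)) (v := dir n α)
      (by
        simp only [pot_fderiv_dir]
        have := (rho_mul_integrable (((coord_continuous n α).mul (hg α).continuous))).neg
        refine this.congr (Eventually.of_forall fun y => ?_)
        simp only [Pi.neg_apply, Pi.mul_apply]; ring)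
      (pot_mul_integrable hc) (pot_mul_integrable (hg α).continuous)
      (fun y _ => (pot_hasFDerivAt y).differentiableAt)
      (fun y _ => (hg α).differentiable (by norm_num) y)
    simp only [hgd, pot_fderiv_dir] at ibp
    rw [ibp, ← integral_neg]
    refine integral_congr_ae (Eventually.of_forall fun y => ?_)
    simp only; ring
  have hsum : ∀ y : Efull n, fderiv ℝ f (x0 + r • y) y =
      ∑ α, coord n y α * fderiv ℝ f (x0 + r • y) (dir n α) := by
    intro y
    conv_lhs => rw [← sum_coord_dir hn y]
    have : (x0 + r • ∑ α, coord n y α • dir n α) = x0 + r • y := by rw [sum_coord_dir hn y]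
    rw [this, map_sum]
    simp
  have hD2c : ∀ α : Fin n, Continuous fun y => r * D2 f (x0 + r • y) (dir n α) := by
    intro α
    have := ((hg α).continuous_fderiv (by norm_num)).clm_apply (continuous_const (y := dir n α))
    simpa only [hgd] using this
  calc ∫ y, rho n y * fderiv ℝ f (x0 + r • y) y
      = ∫ y, ∑ α, rho n y * (coord n y α * fderiv ℝ f (x0 + r • y) (dir n α)) := by
        refine integral_congr_ae (Eventually.of_forall fun y => ?_)
        simp only [hsum, Finset.mul_sum]
    _ = ∑ α, ∫ y, rho n y * (coord n y α * fderiv ℝ f (x0 + r • y) (dir n α)) :=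
        integral_finsetSum _ fun α _ =>
          rho_mul_integrable ((coord_continuous n α).mul (hg α).continuous)
    _ = ∑ α, ∫ y, pot n y * (r * D2 f (x0 + r • y) (dir n α)) :=
        Finset.sum_congr rfl fun α _ => (key α).symm
    _ = ∫ y, ∑ α, pot n y * (r * D2 f (x0 + r • y) (dir n α)) :=
        (integral_finsetSum _ fun α _ => pot_mul_integrable (hD2c α)).symm
    _ = ∫ y, r * (pot n y * lapl n f (x0 + r • y)) := by
        refine integral_congr_ae (Eventually.of_forall fun y => ?_)
        simp only [lapl, Finset.mul_sum]
        exact Finset.sum_congr rfl fun α _ => by simp only [D2]; ring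
    _ = _ := integral_const_mul _ _

lemma mean_hasDerivAt {n : ℕ} {f : Efull n → ℝ} (hf : ContDiff ℝ 2 f) (x0 : Efull n) (r : ℝ) :
    HasDerivAt (fun r : ℝ => ∫ y, rho n y * f (x0 + r • y))
      (∫ y, rho n y * fderiv ℝ f (x0 + r • y) y) r := by
  have hf1 : Continuous (fderiv ℝ f) := hf.continuous_fderiv (by norm_num)
  have hc : Continuous fun p : ℝ × Efull n => fderiv ℝ f (x0 + p.1 • p.2) p.2 :=
    (hf1.comp (by fun_prop)).clm_apply continuous_snd
  obtain ⟨B, hB⟩ := ((isCompact_closedBall r 1).prod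
    (isCompact_closedBall (0 : Efull n) 1)).exists_bound_of_continuousOn hc.continuousOn
  have hd : ∀ (y : Efull n) (t : ℝ), HasDerivAt (fun t : ℝ => rho n y * f (x0 + t • y))
      (rho n y * fderiv ℝ f (x0 + t • y) y) t := by
    intro y t
    have h1 : HasDerivAt (fun t : ℝ => x0 + t • y) y t := by
      have h := ((hasDerivAt_id t).smul_const y).const_add x0
      rw [one_smul] at h
      exact h
    exact (((hf.differentiable (by norm_num) _).hasFDerivAt).comp_hasDerivAt t h1).const_mul _
  have hfc : ∀ t : ℝ, Continuous fun y : Efull n => f (x0 + t • y) := fun t =>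
    hf.continuous.comp (by fun_prop)
  refine (hasDerivAt_integral_of_dominated_loc_of_deriv_le (μ := volume)
    (F := fun (t : ℝ) (y : Efull n) => rho n y * f (x0 + t • y))
    (F' := fun (t : ℝ) (y : Efull n) => rho n y * fderiv ℝ f (x0 + t • y) y)
    (bound := fun y => rho n y * B) (closedBall_mem_nhds r one_pos)
    (Eventually.of_forall fun t => (rho_mul_integrable (hfc t)).aestronglyMeasurable)
    (rho_mul_integrable (hfc r)) ?_ ?_ (rho_mul_integrable continuous_const) ?_).2
  · refine (rho_mul_integrable ?_).aestronglyMeasurable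
    exact hc.comp (by fun_prop : Continuous fun y : Efull n => (r, y))
  · refine Eventually.of_forall fun y t ht => ?_
    rw [norm_mul, Real.norm_of_nonneg (rho_nonneg y)]
    by_cases hr : rho n y = 0
    · simp [hr]
    · refine mul_le_mul_of_nonneg_left ?_ (rho_nonneg y)
      exact hB (t, y) ⟨ht, by simpa using (norm_lt_one_of_rho_ne hr).le⟩
  · exact Eventually.of_forall fun y t _ => hd y t

/-- Mean value inequality for a globally `C²` function that is subharmonic on a ball. -/
lemma mean_le {n : ℕ} (hn : 2 ≤ n) {f : Efull n → ℝ} (hf : ContDiff ℝ 2 f) {x0 : Efull n}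
    {R : ℝ} (hR : 0 < R) (hsub : ∀ x ∈ ball x0 R, 0 ≤ lapl n f x) :
    (∫ y, rho n y) * f x0 ≤ ∫ y, rho n y * f (x0 + R • y) := by
  set m : ℝ → ℝ := fun r => ∫ y, rho n y * f (x0 + r • y) with hm
  have hder := fun r => mean_hasDerivAt hf x0 r
  have hmono : MonotoneOn m (Set.Icc 0 R) := by
    refine monotoneOn_of_deriv_nonneg (convex_Icc 0 R)
      (fun r _ => (hder r).continuousAt.continuousWithinAt)
      (fun r _ => (hder r).differentiableAt.differentiableWithinAt) fun r hr => ?_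
    rw [interior_Icc] at hr
    rw [(hder r).deriv, rho_flux hn hf]
    refine mul_nonneg hr.1.le (integral_nonneg fun y => ?_)
    show 0 ≤ pot n y * lapl n f (x0 + r • y)
    by_cases h : rho n y = 0
    · simp [pot, h]
    · refine mul_nonneg (pot_nonneg y) (hsub _ ?_)
      have := norm_lt_one_of_rho_ne h
      rw [mem_ball, dist_eq_norm, add_sub_cancel_left, norm_smul, Real.norm_of_nonneg hr.1.le]
      nlinarith [hr.1, hr.2, norm_nonneg y]
  have := hmono ⟨le_rfl, hR.le⟩ ⟨hR.le, le_rfl⟩ hR.le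
  have h0 : m 0 = (∫ y, rho n y) * f x0 := by
    simp [hm, integral_mul_const]
  rw [← h0]; exact this

end MeanValue

/-! ### Local mean values and the interior gradient estimate -/

section LocalMeanValue

lemma lapl_congr {n : ℕ} {f g : Efull n → ℝ} {x : Efull n} (h : f =ᶠ[𝓝 x] g) :
    lapl n f x = lapl n g x :=
  Finset.sum_congr rfl fun α _ => D2_congr h (dir n α)

lemma lapl_neg {n : ℕ} {f : Efull n → ℝ} {x : Efull n} (hf : ContDiffAt ℝ 2 f x) :
    lapl n (fun y => - f y) x = - lapl n f x := by
  have h : ∀ e, D2 (fun y => - f y) x e = - D2 f x e := fun e => by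
    have := D2_const_mul hf (-1) e
    simpa using this
  show ∑ α, D2 (fun y => - f y) x (dir n α) = - ∑ α, D2 f x (dir n α)
  simp [h]

/-- Cutting off outside a ball turns a locally `C²` function into a globally `C²` one. -/
lemma exists_global {n : ℕ} {f : Efull n → ℝ} {x0 : Efull n} {R : ℝ} (hR : 0 < R)
    (hf : ∀ x ∈ ball x0 (2 * R), ContDiffAt ℝ 2 f x) :
    ∃ F : Efull n → ℝ, ContDiff ℝ 2 F ∧ ∀ x ∈ closedBall x0 R, F x = f x := by
  let χ : ContDiffBump x0 := ⟨R, 3 / 2 * R, hR, by linarith⟩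
  refine ⟨fun x => χ x * f x, ?_, fun x hx => ?_⟩
  · rw [contDiff_iff_contDiffAt]
    intro x
    by_cases hx : x ∈ ball x0 (2 * R)
    · exact χ.contDiffAt.mul (hf x hx)
    · have hx' : x ∈ (closedBall x0 (3 / 2 * R))ᶜ := by
        simp only [mem_ball, not_lt] at hx
        simp only [Set.mem_compl_iff, mem_closedBall, not_le]
        linarith
      refine (contDiffAt_const (c := (0:ℝ))).congr_of_eventuallyEq ?_
      filter_upwards [isClosed_closedBall.isOpen_compl.mem_nhds hx'] with y hy
      rw [χ.zero_of_le_dist (by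
        simp only [Set.mem_compl_iff, mem_closedBall, not_le] at hy; exact hy.le), zero_mul]
  · show χ x * f x = f x
    rw [χ.one_of_mem_closedBall hx, one_mul]

lemma lapl_global {n : ℕ} {f F : Efull n → ℝ} {x0 : Efull n} {R : ℝ}
    (hF : ∀ x ∈ closedBall x0 R, F x = f x) {x : Efull n} (hx : x ∈ ball x0 R) :
    lapl n F x = lapl n f x := by
  refine lapl_congr ?_
  filter_upwards [isOpen_ball.mem_nhds hx] with y hy
  exact hF y (ball_subset_closedBall hy)

lemma mean_le_local {n : ℕ} (hn : 2 ≤ n) {f : Efull n → ℝ} {x0 : Efull n} {R : ℝ} (hR : 0 < R)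
    (hf : ∀ x ∈ ball x0 (2 * R), ContDiffAt ℝ 2 f x) (hsub : ∀ x ∈ ball x0 R, 0 ≤ lapl n f x) :
    (∫ y, rho n y) * f x0 ≤ ∫ y, rho n y * f (x0 + R • y) := by
  obtain ⟨F, hF, hFf⟩ := exists_global hR hf
  have := mean_le hn hF hR fun x hx => by rw [lapl_global hFf hx]; exact hsub x hx
  rw [hFf x0 (mem_closedBall_self hR.le)] at this
  refine this.trans (le_of_eq (integral_congr_ae (Eventually.of_forall fun y => ?_)))
  show rho n y * F (x0 + R • y) = rho n y * f (x0 + R • y)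
  by_cases h : rho n y = 0
  · simp [h]
  · rw [hFf]
    have := norm_lt_one_of_rho_ne h
    rw [mem_closedBall, dist_eq_norm, add_sub_cancel_left, norm_smul, Real.norm_of_nonneg hR.le]
    nlinarith

lemma rho_lip {n : ℕ} {y k : Efull n} (hk : ‖k‖ ≤ 1) :
    |rho n (y - k) - rho n y| ≤ (closedBall (0 : Efull n) 2).indicator (fun _ => 10 * ‖k‖) y := by
  by_cases hy : y ∈ closedBall (0 : Efull n) 2
  · rw [Set.indicator_of_mem hy]
    have hy2 : ‖y‖ ≤ 2 := by simpa using hy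
    unfold rho
    refine (abs_max_sub_max_le_abs _ _ _).trans ?_
    unfold eucSq
    have a1 : ‖y.1‖ ≤ 2 := (norm_fst_le y).trans hy2
    have a2 : |y.2| ≤ 2 := (norm_snd_le y).trans hy2
    have b1 : ‖k.1‖ ≤ ‖k‖ := norm_fst_le k
    have b2 : |k.2| ≤ ‖k‖ := norm_snd_le k
    have c1 : |‖y.1 - k.1‖ - ‖y.1‖| ≤ ‖k.1‖ := by
      have := abs_norm_sub_norm_le (y.1 - k.1) y.1
      simpa using this
    have d1 : |‖y.1 - k.1‖ ^ 2 - ‖y.1‖ ^ 2| ≤ 5 * ‖k‖ := by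
      rw [sq_sub_sq, abs_mul]
      have : |‖y.1 - k.1‖ + ‖y.1‖| ≤ 5 := by
        rw [abs_of_nonneg (by positivity)]
        have := norm_sub_le y.1 k.1
        linarith
      nlinarith [abs_nonneg (‖y.1 - k.1‖ - ‖y.1‖), norm_nonneg k.1,
        abs_nonneg (‖y.1 - k.1‖ + ‖y.1‖)]
    have d2 : |(y.2 - k.2) ^ 2 - y.2 ^ 2| ≤ 5 * ‖k‖ := by
      have e : (y.2 - k.2) ^ 2 - y.2 ^ 2 = (-k.2) * (2 * y.2 - k.2) := by ring
      rw [e, abs_mul, abs_neg]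
      have : |2 * y.2 - k.2| ≤ 5 := by
        have := abs_sub (2 * y.2) k.2
        rw [abs_mul, abs_two] at this
        linarith
      nlinarith [abs_nonneg k.2, abs_nonneg (2 * y.2 - k.2)]
    have e : 1 - (‖(y - k).1‖ ^ 2 + (y - k).2 ^ 2) - (1 - (‖y.1‖ ^ 2 + y.2 ^ 2)) =
        -(‖y.1 - k.1‖ ^ 2 - ‖y.1‖ ^ 2) - ((y.2 - k.2) ^ 2 - y.2 ^ 2) := by
      simp only [Prod.fst_sub, Prod.snd_sub]; ring
    rw [e]
    have := abs_sub (-(‖y.1 - k.1‖ ^ 2 - ‖y.1‖ ^ 2)) ((y.2 - k.2) ^ 2 - y.2 ^ 2)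
    rw [abs_neg] at this
    linarith
  · rw [Set.indicator_of_notMem hy]
    have hy2 : 2 < ‖y‖ := by simpa using hy
    have h1 : 1 ≤ ‖y - k‖ := by
      have := norm_sub_norm_le y k
      linarith
    rw [rho_eq_zero h1, rho_eq_zero (by linarith)]
    simp

/-- The dimensional constant in the interior gradient estimate. -/
def gradConst (n : ℕ) : ℝ := 40 * volume.real (closedBall (0 : Efull n) 2) / ∫ y, rho n y

lemma gradConst_nonneg (n : ℕ) : 0 ≤ gradConst n := by
  unfold gradConst
  have := (rho_integral_pos n).le
  positivity

/-- Interior gradient estimate, from the mean value property and the Lipschitz weight `ρ`. -/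
lemma grad_est_aux {n : ℕ} (hn : 2 ≤ n) {f : Efull n → ℝ} {x0 : Efull n} {R S : ℝ} (hR : 0 < R)
    (hf : ∀ x ∈ ball x0 (4 * R), ContDiffAt ℝ 2 f x)
    (hh : ∀ x ∈ ball x0 (4 * R), lapl n f x = 0)
    (hS : ∀ x ∈ ball x0 (4 * R), |f x| ≤ S) :
    ‖fderiv ℝ f x0‖ ≤ gradConst n * S / (4 * R) := by
  obtain ⟨F, hF, hFf⟩ := exists_global (f := f) (x0 := x0) (R := 2 * R) (by linarith)
    (fun x hx => hf x (by
      have e : 2 * (2 * R) = 4 * R := by ring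
      rwa [e] at hx))
  have hlap : ∀ x ∈ ball x0 (2 * R), lapl n F x = 0 := fun x hx => by
    rw [lapl_global hFf hx]
    exact hh x (ball_subset_ball (by linarith) hx)
  have hFS : ∀ x ∈ closedBall x0 (2 * R), |F x| ≤ S := fun x hx => by
    rw [hFf x hx]
    exact hS x (closedBall_subset_ball (by linarith) hx)
  have hS0 : 0 ≤ S := (abs_nonneg _).trans (hS x0 (mem_ball_self (by linarith)))
  set m0 := ∫ y, rho n y with hm0
  have hm0p : 0 < m0 := rho_integral_pos n
  -- the mean value property at every point close to `x0`
  have hmv : ∀ z ∈ ball x0 R, m0 * F z = ∫ y, rho n y * F (z + R • y) := by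
    intro z hz
    have hsubset : ball z R ⊆ ball x0 (2 * R) := by
      refine ball_subset_ball' ?_
      rw [mem_ball] at hz; linarith
    refine le_antisymm (mean_le hn hF hR fun x hx => (hlap x (hsubset hx)).ge) ?_
    have h2 := mean_le hn hF.neg hR (x0 := z) fun x hx => by
      have := lapl_neg (n := n) (x := x) hF.contDiffAt
      rw [hlap x (hsubset hx)] at this
      exact (this.trans neg_zero).ge
    simp only [mul_neg, integral_neg] at h2
    linarith
  have hlip : ∀ z ∈ ball x0 R, ‖f z - f x0‖ ≤ gradConst n * S / (4 * R) * ‖z - x0‖ := by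
    intro z hz
    have hx0R : x0 ∈ ball x0 R := mem_ball_self hR
    rw [← hFf z (ball_subset_closedBall (ball_subset_ball (by linarith) hz)),
      ← hFf x0 (mem_closedBall_self (by linarith))]
    set k : Efull n := R⁻¹ • (z - x0) with hk
    have hkn : ‖k‖ = ‖z - x0‖ / R := by
      rw [hk, norm_smul, norm_inv, Real.norm_of_nonneg hR.le]; ring
    have hk1 : ‖k‖ ≤ 1 := by
      rw [hkn, div_le_one hR]
      rw [mem_ball, dist_eq_norm] at hz; exact hz.le
    have hcF : Continuous fun y : Efull n => F (x0 + R • y) := hF.continuous.comp (by fun_prop)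
    have e1 : ∫ y, rho n y * F (z + R • y) = ∫ y, rho n (y - k) * F (x0 + R • y) := by
      rw [← integral_sub_right_eq_self (fun y => rho n y * F (z + R • y)) k]
      refine integral_congr_ae (Eventually.of_forall fun y => ?_)
      have : z + R • (y - k) = x0 + R • y := by
        rw [hk, smul_sub, smul_smul, mul_inv_cancel₀ hR.ne', one_smul]; abel
      simp only [this]
    have i1 : Integrable fun y => rho n (y - k) * F (x0 + R • y) := by
      refine (((rho_continuous n).comp (by fun_prop)).mul hcF).integrable_of_hasCompactSupport ?_
      refine HasCompactSupport.mul_right ?_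
      exact (rho_hasCompactSupport n).comp_homeomorph (Homeomorph.subRight k)
    have e2 : m0 * (F z - F x0) = ∫ y, (rho n (y - k) - rho n y) * F (x0 + R • y) := by
      rw [mul_sub, hmv z hz, hmv x0 hx0R, e1, ← integral_sub i1 (rho_mul_integrable hcF)]
      refine integral_congr_ae (Eventually.of_forall fun y => ?_)
      simp only; ring
    have e3 : ‖m0 * (F z - F x0)‖ ≤
        ∫ y, (closedBall (0 : Efull n) 2).indicator (fun _ => 10 * ‖k‖ * S) y := by
      rw [e2]
      refine norm_integral_le_of_norm_le ?_ (Eventually.of_forall fun y => ?_)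
      · refine (integrable_indicator_iff measurableSet_closedBall).2 ?_
        exact integrableOn_const (measure_closedBall_lt_top.ne)
      · rw [norm_mul, Real.norm_eq_abs]
        have h1 := rho_lip (y := y) hk1
        by_cases hy : y ∈ closedBall (0 : Efull n) 2
        · rw [Set.indicator_of_mem hy] at h1 ⊢
          refine mul_le_mul h1 ?_ (norm_nonneg _) (by positivity)
          refine hFS _ ?_
          rw [mem_closedBall, dist_eq_norm, add_sub_cancel_left, norm_smul,
            Real.norm_of_nonneg hR.le]
          have : ‖y‖ ≤ 2 := by simpa using hy
          nlinarith
        · rw [Set.indicator_of_notMem hy] at h1 ⊢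
          have : |rho n (y - k) - rho n y| = 0 := le_antisymm h1 (abs_nonneg _)
          rw [this, zero_mul]
    rw [integral_indicator measurableSet_closedBall, setIntegral_const, smul_eq_mul, norm_mul,
      Real.norm_of_nonneg hm0p.le, hkn] at e3
    have e4 : gradConst n * S / (4 * R) * ‖z - x0‖ =
        (volume.real (closedBall (0 : Efull n) 2) * (10 * (‖z - x0‖ / R) * S)) / m0 := by
      unfold gradConst
      rw [← hm0]
      field_simp
      ring
    rw [e4, le_div_iff₀ hm0p]
    linarith
  refine norm_fderiv_le_of_lip' ℝ ?_ ?_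
  · have := gradConst_nonneg n; positivity
  · filter_upwards [ball_mem_nhds x0 hR] with z hz
    exact hlip z hz

lemma grad_est {n : ℕ} (hn : 2 ≤ n) {f : Efull n → ℝ} {x0 : Efull n} {R S c : ℝ} (hR : 0 < R)
    (hf : ∀ x ∈ ball x0 R, ContDiffAt ℝ 2 f x)
    (hh : ∀ x ∈ ball x0 R, lapl n f x = 0)
    (hS : ∀ x ∈ ball x0 R, |f x - c| ≤ S) :
    ‖fderiv ℝ f x0‖ ≤ gradConst n * S / R := by
  have e : 4 * (R / 4) = R := by ring
  have := grad_est_aux hn (f := fun y => f y - c) (x0 := x0) (R := R / 4) (S := S) (by linarith)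
    (by rw [e]; exact fun x hx => (hf x hx).sub contDiffAt_const)
    (by
      rw [e]; intro x hx
      rw [← hh x hx]
      simp only [lapl, fderiv_sub_const])
    (by rw [e]; exact hS)
  rwa [e, fderiv_sub_const] at this

end LocalMeanValue

/-! ### Convex truncation -/

section Truncation

/-- A `C²` convex regularisation of `s ↦ s₊²/2`, given with its first two derivatives. -/
lemma exists_trunc {η : ℝ} (hη : 0 < η) : ∃ G G1 G2 : ℝ → ℝ,
    (∀ s, HasDerivAt G (G1 s) s) ∧ (∀ s, HasDerivAt G1 (G2 s) s) ∧ ContDiff ℝ 2 G ∧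
    (∀ s, 0 ≤ G2 s) ∧ (∀ s, s ≤ 0 → G s = 0) ∧ (∀ s, 0 ≤ G s) ∧ (∀ s, 0 ≤ s → G s ≤ s ^ 2) ∧
    (∀ s, η ≤ s → (s - η) ^ 2 / 2 ≤ G s) := by
  set G2 : ℝ → ℝ := fun s => min (max s 0 / η) 1 with hG2
  have hG2c : Continuous G2 := by fun_prop
  have hG2n : ∀ s, 0 ≤ G2 s := fun s => le_min (by positivity) zero_le_one
  have hG2l : ∀ s, G2 s ≤ 1 := fun s => min_le_right _ _
  have hG20 : ∀ s, s ≤ 0 → G2 s = 0 := fun s hs => by simp [hG2, max_eq_right hs]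
  have hG21 : ∀ s, η ≤ s → G2 s = 1 := fun s hs => by
    simp only [hG2]
    rw [max_eq_left (hη.le.trans hs)]
    exact min_eq_right ((one_le_div hη).2 hs)
  set G1 : ℝ → ℝ := fun s => ∫ t in (0:ℝ)..s, G2 t with hG1
  have d1 : ∀ s, HasDerivAt G1 (G2 s) s := fun s => hG2c.integral_hasStrictDerivAt 0 s |>.hasDerivAt
  have hG1c : Continuous G1 := continuous_iff_continuousAt.2 fun s => (d1 s).continuousAt
  set G : ℝ → ℝ := fun s => ∫ t in (0:ℝ)..s, G1 t with hG
  have d0 : ∀ s, HasDerivAt G (G1 s) s := fun s => hG1c.integral_hasStrictDerivAt 0 s |>.hasDerivAt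
  have hGc : Continuous G := continuous_iff_continuousAt.2 fun s => (d0 s).continuousAt
  have hderiv1 : deriv G1 = G2 := funext fun s => (d1 s).deriv
  have hderiv0 : deriv G = G1 := funext fun s => (d0 s).deriv
  have hG10 : ∀ s, s ≤ 0 → G1 s = 0 := fun s hs => by
    have : G1 s = ∫ t in (0:ℝ)..s, (0:ℝ) := intervalIntegral.integral_congr fun t ht => by
      rw [Set.uIcc_of_ge hs] at ht
      exact hG20 t ht.2
    simpa using this
  have hG00 : ∀ s, s ≤ 0 → G s = 0 := fun s hs => by
    have : G s = ∫ t in (0:ℝ)..s, (0:ℝ) := intervalIntegral.integral_congr fun t ht => by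
      rw [Set.uIcc_of_ge hs] at ht
      exact hG10 t ht.2
    simpa using this
  have hG1m : Monotone G1 := monotone_of_deriv_nonneg (fun s => (d1 s).differentiableAt)
    fun s => by rw [(d1 s).deriv]; exact hG2n s
  have hG1n : ∀ s, 0 ≤ G1 s := fun s => by
    rcases le_total s 0 with h | h
    · rw [hG10 s h]
    · rw [← hG10 0 le_rfl]; exact hG1m h
  have hGm : Monotone G := monotone_of_deriv_nonneg (fun s => (d0 s).differentiableAt)
    fun s => by rw [(d0 s).deriv]; exact hG1n s
  have hGn : ∀ s, 0 ≤ G s := fun s => by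
    rcases le_total s 0 with h | h
    · rw [hG00 s h]
    · rw [← hG00 0 le_rfl]; exact hGm h
  -- upper bound `G1 s ≤ s` for `s ≥ 0`
  have hG1u : ∀ s, 0 ≤ s → G1 s ≤ s := fun s hs => by
    have hm : Monotone fun s => s - G1 s :=
      monotone_of_deriv_nonneg (fun s => ((hasDerivAt_id s).sub (d1 s)).differentiableAt)
        fun s => by
          have := ((hasDerivAt_id s).sub (d1 s)).deriv
          have e : deriv (fun s => s - G1 s) s = 1 - G2 s := this
          rw [e]; linarith [hG2l s]
    have := hm hs
    simp only [hG10 0 le_rfl] at this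
    linarith
  have hG1l : ∀ s, η ≤ s → s - η ≤ G1 s := fun s hs => by
    have hm : MonotoneOn (fun s => G1 s - s) (Set.Ici η) := by
      refine monotoneOn_of_deriv_nonneg (convex_Ici η)
        (hG1c.sub continuous_id).continuousOn
        (fun s _ => ((d1 s).sub (hasDerivAt_id s)).differentiableAt.differentiableWithinAt)
        fun s hs => ?_
      rw [interior_Ici] at hs
      have e : deriv (fun s => G1 s - s) s = G2 s - 1 := ((d1 s).sub (hasDerivAt_id s)).deriv
      rw [e, hG21 s (le_of_lt hs)]; simp
    have := hm (Set.self_mem_Ici) hs hs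
    simp only at this
    linarith [hG1n η]
  have hdsq : ∀ a s : ℝ, HasDerivAt (fun s : ℝ => (s - a) ^ 2 / 2) (s - a) s := fun a s => by
    have := (((hasDerivAt_id s).sub_const a).pow 2).div_const 2
    convert! this using 1
    simp
  refine ⟨G, G1, G2, d0, d1, ?_, hG2n, hG00, hGn, ?_, ?_⟩
  · have c1 : ContDiff ℝ 1 G1 := contDiff_one_iff_deriv.2
      ⟨fun s => (d1 s).differentiableAt, by rw [hderiv1]; exact hG2c⟩
    have e : (2 : WithTop ℕ∞) = 1 + 1 := by norm_num
    rw [e, contDiff_succ_iff_deriv]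
    exact ⟨fun s => (d0 s).differentiableAt, by simp, by rw [hderiv0]; exact c1⟩
  · intro s hs
    have hm : MonotoneOn (fun s => (s - 0) ^ 2 / 2 - G s) (Set.Ici 0) := by
      refine monotoneOn_of_deriv_nonneg (convex_Ici 0) ?_
        (fun s _ => ((hdsq 0 s).sub (d0 s)).differentiableAt.differentiableWithinAt)
        fun s hs => ?_
      · exact Continuous.continuousOn (by fun_prop)
      rw [interior_Ici] at hs
      have e : deriv (fun s => (s - 0) ^ 2 / 2 - G s) s = (s - 0) - G1 s :=
        ((hdsq 0 s).sub (d0 s)).deriv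
      rw [e]; linarith [hG1u s (le_of_lt hs)]
    have := hm (Set.self_mem_Ici) hs hs
    simp only [hG00 0 le_rfl] at this
    nlinarith [sq_nonneg s]
  · intro s hs
    have hm : MonotoneOn (fun s => G s - (s - η) ^ 2 / 2) (Set.Ici η) := by
      refine monotoneOn_of_deriv_nonneg (convex_Ici η) ?_
        (fun s _ => ((d0 s).sub (hdsq η s)).differentiableAt.differentiableWithinAt)
        fun s hs => ?_
      · exact Continuous.continuousOn (by fun_prop)
      rw [interior_Ici] at hs
      have e : deriv (fun s => G s - (s - η) ^ 2 / 2) s = G1 s - (s - η) :=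
        ((d0 s).sub (hdsq η s)).deriv
      rw [e]; linarith [hG1l s (le_of_lt hs)]
    have := hm (Set.self_mem_Ici) hs hs
    simp only at this
    nlinarith [hGn η]

end Truncation

/-! ### The `L² → L^∞` bound -/

section SupBound

variable {n : ℕ} {ε : ℝ} {h1 h2 : Ep n → ℝ}

lemma cont_fst_cyl {h : Ep n → ℝ} (hc : ContinuousOn h (closedBall 0 1)) :
    ContinuousOn (fun x : Efull n => h x.1) {x | ‖x.1‖ < 1} :=
  hc.comp continuous_fst.continuousOn fun x (hx : ‖x.1‖ < 1) => by simpa using hx.le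

lemma cyl_open : IsOpen {x : Efull n | ‖x.1‖ < 1} :=
  isOpen_lt (by fun_prop) continuous_const

lemma ev_above {h : Ep n → ℝ} (hc : ContinuousOn h (closedBall 0 1)) {x : Efull n}
    (hx : ‖x.1‖ < 1) {a : ℝ} (ha : a + h x.1 < x.2) : ∀ᶠ y : Efull n in 𝓝 x, a + h y.1 < y.2 := by
  have h1 : ContinuousAt (fun x : Efull n => a + h x.1) x :=
    continuousAt_const.add ((cont_fst_cyl hc).continuousAt (cyl_open.mem_nhds hx))
  exact h1.tendsto.eventually_lt continuousAt_snd.tendsto ha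

lemma ev_below {h : Ep n → ℝ} (hc : ContinuousOn h (closedBall 0 1)) {x : Efull n}
    (hx : ‖x.1‖ < 1) {a : ℝ} (ha : x.2 < a + h x.1) : ∀ᶠ y : Efull n in 𝓝 x, y.2 < a + h y.1 := by
  have h1 : ContinuousAt (fun x : Efull n => a + h x.1) x :=
    continuousAt_const.add ((cont_fst_cyl hc).continuousAt (cyl_open.mem_nhds hx))
  exact continuousAt_snd.tendsto.eventually_lt h1.tendsto ha

lemma Omega_open (hc1 : ContinuousOn h1 (closedBall 0 1)) (hc2 : ContinuousOn h2 (closedBall 0 1)) :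
    IsOpen (Omega n ε h1 h2 1) := by
  rw [isOpen_iff_mem_nhds]
  rintro x ⟨ha, hb, hc⟩
  filter_upwards [cyl_open.mem_nhds ha, ev_above hc2 ha hb, ev_below hc1 ha hc] with y a b c
  exact ⟨a, b, c⟩

/-- The constant in the one-sided `L² → L^∞` bound. -/
def supConst (n : ℕ) : ℝ :=
  √(2 * (8 ^ Module.finrank ℝ (Efull n) / ∫ y, rho n y))

/-- One-sided `L² → L^∞` bound: the convex truncation of `u` above its boundary values, extended
by zero, is a `C²` subharmonic function on the whole cylinder. -/
lemma sup_bound (hn : 2 ≤ n) (hc1 : ContinuousOn h1 (closedBall 0 1))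
    (hc2 : ContinuousOn h2 (closedBall 0 1)) {u : Efull n → ℝ}
    (hu : ContDiffOn ℝ 2 u (Omega n ε h1 h2 1)) (hl : ∀ x ∈ Omega n ε h1 h2 1, lapl n u x = 0)
    (hcu : ContinuousOn u (Omega n ε h1 h2 1 ∪ Gammap n ε h1 1 ∪ Gammam n ε h2 1))
    {N : ℝ} (hN : 0 ≤ N)
    (hb : ∀ y : Ep n, ‖y‖ ≤ 1 → u (y, ε/2 + h1 y) ≤ N ∧ u (y, -ε/2 + h2 y) ≤ N)
    (hi : IntegrableOn (fun x => ‖u x‖ ^ 2) (Omega n ε h1 h2 1))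
    {η : ℝ} (hη : 0 < η) {x : Efull n} (hx : x ∈ Omega n ε h1 h2 (3/4)) :
    u x ≤ N + 2 * η +
      supConst n * (∫ y in Omega n ε h1 h2 1, ‖u y‖ ^ 2) ^ ((1:ℝ)/2) := by
  classical
  obtain ⟨G, G1, G2, d0, d1, hGcd, hG2n, hG0, hGn, hGu, hGl⟩ := exists_trunc hη
  set Ω := Omega n ε h1 h2 1 with hΩ
  have hΩo : IsOpen Ω := Omega_open hc1 hc2
  set v : Efull n → ℝ := Ω.indicator fun z => G (u z - (N + η)) with hv
  have hucd : ∀ z ∈ Ω, ContDiffAt ℝ 2 u z := fun z hz => hu.contDiffAt (hΩo.mem_nhds hz)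
  have hvin : ∀ z ∈ Ω, v =ᶠ[𝓝 z] fun z => G (u z - (N + η)) := fun z hz => by
    filter_upwards [hΩo.mem_nhds hz] with y hy
    exact Set.indicator_of_mem hy _
  have hvout : ∀ z : Efull n, ‖z.1‖ < 1 → z ∉ Ω → v =ᶠ[𝓝 z] fun _ => 0 := by
    intro z hz hzΩ
    have hnot : (∀ᶠ y in 𝓝 z, y ∉ Ω) → v =ᶠ[𝓝 z] fun _ => 0 := fun h => by
      filter_upwards [h] with y hy
      exact Set.indicator_of_notMem hy _
    have hbd : z ∈ Ω ∪ Gammap n ε h1 1 ∪ Gammam n ε h2 1 → u z ≤ N → v =ᶠ[𝓝 z] fun _ => 0 := by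
      intro hzS hzN
      have h1 : ∀ᶠ y in 𝓝[Ω ∪ Gammap n ε h1 1 ∪ Gammam n ε h2 1] z, u y < N + η :=
        (hcu z hzS).eventually (gt_mem_nhds (by linarith))
      filter_upwards [eventually_nhdsWithin_iff.1 h1] with y hy
      by_cases hyΩ : y ∈ Ω
      · rw [hv, Set.indicator_of_mem hyΩ]
        exact hG0 _ (by linarith [hy (Or.inl (Or.inl hyΩ))])
      · exact Set.indicator_of_notMem hyΩ _
    rcases lt_trichotomy z.2 (-ε/2 + h2 z.1) with h | h | h
    · refine hnot ?_
      filter_upwards [ev_below hc2 hz h] with y hy hyΩ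
      exact absurd hyΩ.2.1 (not_lt.2 hy.le)
    · refine hbd (Or.inr ⟨hz.le, h⟩) ?_
      have : z = (z.1, -ε/2 + h2 z.1) := Prod.ext rfl h
      rw [this]; exact (hb z.1 hz.le).2
    · rcases lt_trichotomy z.2 (ε/2 + h1 z.1) with h' | h' | h'
      · exact absurd ⟨hz, h, h'⟩ hzΩ
      · refine hbd (Or.inl (Or.inr ⟨hz.le, h'⟩)) ?_
        have : z = (z.1, ε/2 + h1 z.1) := Prod.ext rfl h'
        rw [this]; exact (hb z.1 hz.le).1
      · refine hnot ?_
        filter_upwards [ev_above hc1 hz h'] with y hy hyΩ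
        exact absurd hyΩ.2.2 (not_lt.2 hy.le)
  have hvcd : ∀ z : Efull n, ‖z.1‖ < 1 → ContDiffAt ℝ 2 v z := by
    intro z hz
    by_cases hzΩ : z ∈ Ω
    · refine ContDiffAt.congr_of_eventuallyEq ?_ (hvin z hzΩ)
      exact hGcd.contDiffAt.comp z ((hucd z hzΩ).sub contDiffAt_const)
    · exact contDiffAt_const.congr_of_eventuallyEq (hvout z hz hzΩ)
  have hvsub : ∀ z : Efull n, ‖z.1‖ < 1 → 0 ≤ lapl n v z := by
    intro z hz
    by_cases hzΩ : z ∈ Ω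
    · rw [lapl_congr (hvin z hzΩ)]
      have hcd := (hucd z hzΩ).sub (contDiffAt_const (c := N + η))
      have e : ∀ α, D2 (fun z => G (u z - (N + η))) z (dir n α) =
          G2 (u z - (N + η)) * (fderiv ℝ (fun z => u z - (N + η)) z (dir n α)) ^ 2 +
            G1 (u z - (N + η)) * D2 u z (dir n α) := fun α => by
        rw [D2_comp hcd d0 d1]
        simp only [D2, fderiv_sub_const]
      have e2 : lapl n (fun z => G (u z - (N + η))) z =
          ∑ α, G2 (u z - (N + η)) * (fderiv ℝ (fun z => u z - (N + η)) z (dir n α)) ^ 2 +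
            G1 (u z - (N + η)) * lapl n u z := by
        show ∑ α, D2 (fun z => G (u z - (N + η))) z (dir n α) = _
        simp only [e, Finset.sum_add_distrib]
        rw [← Finset.mul_sum]
        rw [← Finset.mul_sum]
        rfl
      rw [e2, hl z hzΩ, mul_zero, add_zero]
      exact Finset.sum_nonneg fun α _ => mul_nonneg (hG2n _) (sq_nonneg _)
    · rw [lapl_congr (hvout z hz hzΩ)]
      simp [lapl]
  -- `0 ≤ v ≤ u²` on `Ω`
  have hv0 : ∀ z, 0 ≤ v z := fun z => Set.indicator_nonneg (fun _ _ => hGn _) z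
  have hvu : ∀ z, v z ≤ Ω.indicator (fun z => ‖u z‖ ^ 2) z := fun z => by
    refine Set.indicator_le_indicator ?_
    rcases le_total (u z - (N + η)) 0 with h | h
    · rw [hG0 _ h]; positivity
    · refine (hGu _ h).trans ?_
      rw [Real.norm_eq_abs, sq_abs]
      nlinarith
  have hvi : Integrable v := by
    have hui : Integrable (Ω.indicator fun z => ‖u z‖ ^ 2) :=
      hi.integrable_indicator hΩo.measurableSet
    refine hui.mono' ?_ (Eventually.of_forall fun z => ?_)
    · refine (aestronglyMeasurable_indicator_iff hΩo.measurableSet).2 ?_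
      refine ContinuousOn.aestronglyMeasurable ?_ hΩo.measurableSet
      exact hGcd.continuous.comp_continuousOn (hu.continuousOn.sub continuousOn_const)
    · rw [Real.norm_of_nonneg (hv0 z)]; exact hvu z
  set I := ∫ y in Ω, ‖u y‖ ^ 2 with hI
  have hI0 : 0 ≤ I := integral_nonneg fun y => by positivity
  have hvI : ∫ z, v z ≤ I := by
    rw [hI, ← integral_indicator hΩo.measurableSet]
    exact integral_mono hvi (hi.integrable_indicator hΩo.measurableSet) hvu
  have hxΩ : x ∈ Ω := ⟨hx.1.trans (by norm_num), hx.2⟩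
  have hball : ∀ z ∈ ball x (2 * (1/8)), ‖z.1‖ < 1 := fun z hz => by
    have h1 : ‖(z - x).1‖ ≤ ‖z - x‖ := norm_fst_le _
    rw [mem_ball, dist_eq_norm] at hz
    have h2 : ‖z.1‖ ≤ ‖x.1‖ + ‖(z - x).1‖ := by
      have := norm_add_le x.1 (z - x).1
      simpa using this
    have h3 := hx.1
    linarith
  set m0 := ∫ y, rho n y with hm0
  have hm0p : 0 < m0 := rho_integral_pos n
  have hmv := mean_le_local hn (f := v) (x0 := x) (R := 1/8) (by norm_num)
    (fun z hz => hvcd z (hball z hz))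
    (fun z hz => hvsub z (hball z (ball_subset_ball (by norm_num) hz)))
  have hvsi : Integrable fun y => v (x + (1/8 : ℝ) • y) :=
    (hvi.comp_add_left x).comp_smul (by norm_num)
  have hchg : ∫ y, v (x + (1/8 : ℝ) • y) = 8 ^ Module.finrank ℝ (Efull n) * ∫ z, v z := by
    rw [Measure.integral_comp_smul volume (fun y => v (x + y)) (1/8 : ℝ),
      integral_add_left_eq_self v x, smul_eq_mul]
    congr 1
    rw [abs_of_nonneg (by positivity), one_div, inv_pow, inv_inv]
  have hmv2 : m0 * v x ≤ 8 ^ Module.finrank ℝ (Efull n) * I := by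
    refine hmv.trans ?_
    calc ∫ y, rho n y * v (x + (1/8 : ℝ) • y) ≤ ∫ y, v (x + (1/8 : ℝ) • y) := by
          refine integral_mono_of_nonneg (Eventually.of_forall fun y =>
            mul_nonneg (rho_nonneg y) (hv0 _)) hvsi (Eventually.of_forall fun y => ?_)
          exact mul_le_of_le_one_left (hv0 _) (rho_le_one y)
      _ = 8 ^ Module.finrank ℝ (Efull n) * ∫ z, v z := hchg
      _ ≤ _ := by gcongr
  have hvx : v x = G (u x - (N + η)) := Set.indicator_of_mem hxΩ _
  rw [← Real.sqrt_eq_rpow]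
  by_cases hle : u x ≤ N + 2 * η
  · have : 0 ≤ supConst n * √I := mul_nonneg (Real.sqrt_nonneg _) (Real.sqrt_nonneg _)
    linarith
  · push Not at hle
    have h1 := hGl (u x - (N + η)) (by linarith)
    rw [← hvx] at h1
    have h2 : v x ≤ 8 ^ Module.finrank ℝ (Efull n) / m0 * I := by
      rw [div_mul_eq_mul_div, le_div_iff₀ hm0p]; linarith
    have h3 : (u x - (N + 2 * η)) ^ 2 ≤
        2 * (8 ^ Module.finrank ℝ (Efull n) / m0) * I := by nlinarith
    have h4 := Real.le_sqrt_of_sq_le h3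
    rw [Real.sqrt_mul (by positivity)] at h4
    show u x ≤ N + 2 * η + supConst n * √I
    unfold supConst
    linarith

end SupBound

/-! ### The barrier -/

section Barrier

variable {n : ℕ}

/-- The signed vertical distance `σ (c + h(x') - x_n)` to the graph of `c + h`. With `σ = 1`,
`c = ε/2`, `h = h1` it is the depth below the top boundary; with `σ = -1`, `c = -ε/2`, `h = h2`
it is the height above the bottom boundary. -/
def gap (σ c : ℝ) (h : Ep n → ℝ) (x : Efull n) : ℝ := σ * (c + h x.1 - x.2)

/-- The situation seen from one of the two boundary graphs: the region is `0 < gap < δ`, the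
boundary datum is `φ` on `gap = 0` and `ψ` on `gap = δ`, both of `C²`-size `M`, and `u` is harmonic
with `|u| ≤ C1 * M` over `|x'| < 3/4`. -/
structure Side (n : ℕ) (σ c κ C0 ε M C1 : ℝ) (h δ φ ψ : Ep n → ℝ) (u : Efull n → ℝ) : Prop where
  sgn : σ = 1 ∨ σ = -1
  hh : C2le n h κ
  hδ : ContinuousOn δ (closedBall 0 1)
  lip : ∀ y z : Ep n, ‖y‖ < 1 → ‖z‖ < 1 → |δ y - δ z| ≤ 2 * κ * ‖y - z‖
  comp : ∀ y : Ep n, ‖y‖ ≤ 1 → (ε + ‖y‖ ^ 2) / C0 ≤ δ y ∧ δ y ≤ C0 * (ε + ‖y‖ ^ 2)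
  cd : ∀ x : Efull n, ‖x.1‖ < 1 → 0 < gap σ c h x → gap σ c h x < δ x.1 → ContDiffAt ℝ 2 u x
  harm : ∀ x : Efull n, ‖x.1‖ < 1 → 0 < gap σ c h x → gap σ c h x < δ x.1 → lapl n u x = 0
  cont : ContinuousOn u {x | ‖x.1‖ < 1 ∧ 0 ≤ gap σ c h x ∧ gap σ c h x ≤ δ x.1}
  bv0 : ∀ x : Efull n, ‖x.1‖ ≤ 1 → gap σ c h x = 0 → u x = φ x.1
  bv1 : ∀ x : Efull n, ‖x.1‖ ≤ 1 → gap σ c h x = δ x.1 → u x = ψ x.1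
  hφ : C2le n φ M
  hψ : C2le n ψ M
  bd : ∀ x : Efull n, ‖x.1‖ < 3/4 → 0 ≤ gap σ c h x → gap σ c h x ≤ δ x.1 → |u x| ≤ C1 * M

lemma gap_cd {σ c κ : ℝ} {h : Ep n → ℝ} (hh : C2le n h κ) {x : Efull n} (hx : ‖x.1‖ < 1) :
    ContDiffAt ℝ 2 (gap σ c h) x := by
  have h1 : ContDiffAt ℝ 2 (fun y : Efull n => h y.1) x := (hh.cd x.1 hx).comp x contDiffAt_fst
  exact contDiffAt_const.mul ((contDiffAt_const.add h1).sub contDiffAt_snd)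

lemma gap_cont {σ c κ : ℝ} {h : Ep n → ℝ} (hh : C2le n h κ) :
    ContinuousOn (gap σ c h) {x : Efull n | ‖x.1‖ ≤ 1} := by
  have h1 : ContinuousOn (fun y : Efull n => h y.1) {x : Efull n | ‖x.1‖ ≤ 1} :=
    hh.cont.comp continuousOn_fst fun x hx => by simpa using hx
  exact continuousOn_const.mul ((continuousOn_const.add h1).sub continuousOn_snd)

lemma gap_D2 {σ c κ : ℝ} {h : Ep n → ℝ} (hh : C2le n h κ) {x : Efull n} (hx : ‖x.1‖ < 1)
    (e : Efull n) : D2 (gap σ c h) x e = σ * D2 h x.1 e.1 := by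
  have h1 : ContDiffAt ℝ 2 (fun y : Efull n => h y.1) x := (hh.cd x.1 hx).comp x contDiffAt_fst
  have h2 : ContDiffAt ℝ 2 (fun y : Efull n => (-1) * y.2) x := contDiffAt_const.mul contDiffAt_snd
  have h3 : D2 (fun y : Efull n => y.2) x e = 0 := D2_clm (ContinuousLinearMap.snd ℝ (Ep n) ℝ) x e
  have he : gap σ c h = fun y : Efull n => σ * ((c + h y.1) + (-1) * y.2) := by
    funext y; unfold gap; ring
  rw [he, D2_const_mul ((contDiffAt_const.add h1).add h2),
    D2_add (f := fun y : Efull n => c + h y.1) (contDiffAt_const.add h1) h2,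
    D2_add contDiffAt_const h1, D2_const, D2_fst (hh.cd x.1 hx),
    D2_const_mul contDiffAt_snd, h3]
  ring

lemma gap_fderiv_vert {σ c κ : ℝ} {h : Ep n → ℝ} (hh : C2le n h κ) {x : Efull n} (hx : ‖x.1‖ < 1) :
    fderiv ℝ (gap σ c h) x (0, 1) = -σ := by
  have h1 : DifferentiableAt ℝ (fun y : Efull n => h y.1) x :=
    (cd_diff (hh.cd x.1 hx)).comp x differentiableAt_fst
  have h2 : HasFDerivAt (gap σ c h) _ x :=
    (((h1.hasFDerivAt.const_add c).sub (hasFDerivAt_snd (𝕜 := ℝ) (p := x))).const_mul σ)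
  rw [h2.fderiv]
  simp [fderiv_fst_comp (cd_diff (hh.cd x.1 hx))]

/-- The Laplacian of the barrier `(a/τ) t (2τ - t) + b |x' - c|² ± (u - φ)`, where `t = gap`: the
concavity in `t` contributes `-2a/τ`, and half of it absorbs the curvature of the graph as soon as
`2 n κ τ ≤ 1`. -/
lemma lapl_barrier (hn : 2 ≤ n) {σ c κ M : ℝ} (hσ : σ = 1 ∨ σ = -1) {h φ : Ep n → ℝ}
    (hh : C2le n h κ) (hφ : C2le n φ M) {u : Efull n → ℝ} {x : Efull n} (hx : ‖x.1‖ < 1)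
    (hu : ContDiffAt ℝ 2 u x) (hl : lapl n u x = 0) {θ : ℝ} (hθ : θ = 1 ∨ θ = -1)
    {a b τ : ℝ} (ha : 0 ≤ a) (hb : 0 ≤ b) (hτ : 0 < τ) (hτκ : 2 * n * κ * τ ≤ 1)
    (ht0 : 0 ≤ gap σ c h x) (htτ : gap σ c h x ≤ τ) (x0 : Ep n) :
    ContDiffAt ℝ 2 (fun y => a / τ * (gap σ c h y * (2 * τ - gap σ c h y)) + b * ‖y.1 - x0‖ ^ 2 +
      θ * (u y + (-1) * φ y.1)) x ∧
    lapl n (fun y => a / τ * (gap σ c h y * (2 * τ - gap σ c h y)) + b * ‖y.1 - x0‖ ^ 2 +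
      θ * (u y + (-1) * φ y.1)) x ≤ - a / τ + 2 * n * b + n * M := by
  have hκ0 : 0 ≤ κ := (abs_nonneg _).trans (hh.b0 x.1 hx.le)
  have g1 := gap_cd (σ := σ) (c := c) hh hx
  have hG : ∀ s : ℝ, HasDerivAt (fun s => s * (2 * τ - s)) (2 * τ - 2 * s) s := fun s => by
    have := (hasDerivAt_id s).mul ((hasDerivAt_id s).const_sub (2 * τ))
    convert! this using 1
    simp; ring
  have hG1 : ∀ s : ℝ, HasDerivAt (fun s => 2 * τ - 2 * s) (-2) s := fun s => by
    have := ((hasDerivAt_id s).const_mul 2).const_sub (2 * τ)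
    simpa using this
  have c1 : ContDiffAt ℝ 2 (fun y => gap σ c h y * (2 * τ - gap σ c h y)) x :=
    g1.mul (contDiffAt_const.sub g1)
  have c2' : ContDiffAt ℝ 2 (fun y : Ep n => ‖y - x0‖ ^ 2) x.1 :=
    (contDiffAt_id.sub contDiffAt_const).norm_sq ℝ
  have c2 : ContDiffAt ℝ 2 (fun y : Efull n => ‖y.1 - x0‖ ^ 2) x := c2'.comp x contDiffAt_fst
  have c3 : ContDiffAt ℝ 2 (fun y : Efull n => φ y.1) x := (hφ.cd x.1 hx).comp x contDiffAt_fst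
  have c4 : ContDiffAt ℝ 2 (fun y : Efull n => (-1) * φ y.1) x := contDiffAt_const.mul c3
  have c5 : ContDiffAt ℝ 2 (fun y : Efull n => u y + (-1) * φ y.1) x := hu.add c4
  have k1 : ContDiffAt ℝ 2 (fun y => a / τ * (gap σ c h y * (2 * τ - gap σ c h y))) x :=
    contDiffAt_const.mul c1
  have k2 : ContDiffAt ℝ 2 (fun y : Efull n => b * ‖y.1 - x0‖ ^ 2) x := contDiffAt_const.mul c2
  have k3 : ContDiffAt ℝ 2 (fun y : Efull n => θ * (u y + (-1) * φ y.1)) x :=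
    contDiffAt_const.mul c5
  refine ⟨(k1.add k2).add k3, ?_⟩
  have hD : ∀ e : Efull n, ‖e.1‖ ≤ 1 →
      D2 (fun y => a / τ * (gap σ c h y * (2 * τ - gap σ c h y)) + b * ‖y.1 - x0‖ ^ 2 +
        θ * (u y + (-1) * φ y.1)) x e ≤
      -(2 * a / τ) * (fderiv ℝ (gap σ c h) x e) ^ 2 + (2 * a * κ + 2 * b + M) + θ * D2 u x e := by
    intro e he
    rw [D2_add (f := fun y => a / τ * (gap σ c h y * (2 * τ - gap σ c h y)) +
      b * ‖y.1 - x0‖ ^ 2) (k1.add k2) k3, D2_add k1 k2, D2_const_mul c1, D2_const_mul c2,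
      D2_const_mul c5, D2_add hu c4, D2_const_mul c3, D2_fst (hφ.cd x.1 hx),
      D2_comp (G := fun s => s * (2 * τ - s)) g1 hG hG1, gap_D2 hh hx,
      D2_fst (f := fun y : Ep n => ‖y - x0‖ ^ 2) c2', D2_normSq]
    have e1 : a / τ * ((2 * τ - 2 * gap σ c h x) * (σ * D2 h x.1 e.1)) ≤ 2 * a * κ := by
      have q1 : |σ * D2 h x.1 e.1| ≤ κ := by
        rw [abs_mul]
        have : |σ| = 1 := by rcases hσ with rfl | rfl <;> simp
        rw [this, one_mul]; exact hh.D2_abs hx he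
      have q2 : (2 * τ - 2 * gap σ c h x) * (σ * D2 h x.1 e.1) ≤ 2 * τ * κ := by
        calc _ ≤ (2 * τ - 2 * gap σ c h x) * κ :=
              mul_le_mul_of_nonneg_left ((le_abs_self _).trans q1) (by linarith)
          _ ≤ 2 * τ * κ := mul_le_mul_of_nonneg_right (by linarith) hκ0
      calc _ ≤ a / τ * (2 * τ * κ) := mul_le_mul_of_nonneg_left q2 (by positivity)
        _ = 2 * a * κ := by field_simp
    have e2 : b * (2 * ‖e.1‖ ^ 2) ≤ 2 * b := by
      have : ‖e.1‖ ^ 2 ≤ 1 := pow_le_one₀ (norm_nonneg _) he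
      nlinarith
    have e3 : θ * (-1 * D2 φ x.1 e.1) ≤ M := by
      have := abs_le.1 (hφ.D2_abs hx he)
      rcases hθ with rfl | rfl <;> linarith [this.1, this.2]
    have e4 : a / τ * (-2 * (fderiv ℝ (gap σ c h) x e) ^ 2) =
      -(2 * a / τ) * (fderiv ℝ (gap σ c h) x e) ^ 2 := by ring
    rw [mul_add, e4, mul_add]
    linarith
  have hl' : ∑ α, D2 u x (dir n α) = 0 := hl
  obtain ⟨α0, hα0⟩ := exists_dir_vert hn
  have hs : 1 ≤ ∑ α, (fderiv ℝ (gap σ c h) x (dir n α)) ^ 2 := by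
    have := Finset.single_le_sum (f := fun α => (fderiv ℝ (gap σ c h) x (dir n α)) ^ 2)
      (fun α _ => sq_nonneg _) (Finset.mem_univ α0)
    refine le_trans (le_of_eq ?_) this
    simp only [hα0, gap_fderiv_vert hh hx]
    rcases hσ with rfl | rfl <;> norm_num
  have hS : lapl n (fun y => a / τ * (gap σ c h y * (2 * τ - gap σ c h y)) + b * ‖y.1 - x0‖ ^ 2 +
      θ * (u y + (-1) * φ y.1)) x ≤ ∑ α, (-(2 * a / τ) * (fderiv ℝ (gap σ c h) x (dir n α)) ^ 2 +
        (2 * a * κ + 2 * b + M) + θ * D2 u x (dir n α)) :=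
    Finset.sum_le_sum fun α _ => hD _ (dir_fst_norm n α)
  rw [Finset.sum_add_distrib, Finset.sum_add_distrib, ← Finset.mul_sum, ← Finset.mul_sum, hl'] at hS
  simp only [Finset.sum_const, Finset.card_univ, Fintype.card_fin, nsmul_eq_mul] at hS
  have f1 : 2 * a / τ ≤ (2 * a / τ) * ∑ α, (fderiv ℝ (gap σ c h) x (dir n α)) ^ 2 :=
    le_mul_of_one_le_right (by positivity) hs
  have f2 : n * (2 * a * κ) ≤ a / τ := by
    rw [le_div_iff₀ hτ]; nlinarith
  have f3 : 2 * a / τ = a / τ + a / τ := by ring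
  have f4 : -a / τ = -(a / τ) := by ring
  rw [f4]
  nlinarith

end Barrier

/-! ### Linear growth away from one boundary graph -/

section SideBound

variable {n : ℕ}

/-- The constant in the linear growth estimate `side_bound`. -/
def sideConst (n : ℕ) (κ C0 C1 : ℝ) : ℝ := 4 * C0 * (33 * n * (C1 + 1)) + (C1 + 1) * (2 * n * κ)

/-- The quantity `|φ - ψ|/(ε + |x'|²) + M` controlling the gradient at `x'`. -/
def gapSlope (ε M : ℝ) (φ ψ : Ep n → ℝ) (y : Ep n) : ℝ := |φ y - ψ y| / (ε + ‖y‖ ^ 2) + M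

variable {σ c κ C0 ε M C1 : ℝ} {h δ φ ψ : Ep n → ℝ} {u : Efull n → ℝ}

/-- Numerical facts about the horizontal neighbourhood of radius `√(ε + |x₀'|²)/4`. -/
lemma near_facts (hε : 0 < ε) (hε1 : ε < 1/16) {x0 y : Ep n} (hx0 : ‖x0‖ < 9/16)
    {s : ℝ} (hs : 0 < s) (hs2 : 16 * s ^ 2 = ε + ‖x0‖ ^ 2) (hy : ‖y - x0‖ ≤ s) :
    ‖y‖ < 3/4 ∧ (ε + ‖x0‖ ^ 2) / 4 ≤ ε + ‖y‖ ^ 2 ∧ ε + ‖y‖ ^ 2 ≤ 3 * (ε + ‖x0‖ ^ 2) := by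
  have h1 : ‖y‖ ≤ ‖x0‖ + s := by
    have := norm_sub_norm_le y x0; linarith
  have h2 : ‖x0‖ ≤ ‖y‖ + s := by
    have := norm_sub_norm_le x0 y; rw [norm_sub_rev] at this; linarith
  have h0 := norm_nonneg x0
  have h0y := norm_nonneg y
  have hs4 : s < 3/16 := by nlinarith
  refine ⟨by linarith, ?_, ?_⟩
  · nlinarith [sq_nonneg (‖y‖ - s)]
  · nlinarith [sq_nonneg (‖x0‖ - s)]

set_option maxHeartbeats 2000000 in
/-- One-sided form of `side_bound`. -/
lemma side_bound_aux (hn : 2 ≤ n) (hκ : 0 < κ) (hC0 : 1 ≤ C0) (hε : 0 < ε) (hε1 : ε < 1/16)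
    (hM : 0 < M) (hC1 : 0 ≤ C1) (S : Side n σ c κ C0 ε M C1 h δ φ ψ u)
    {x0 : Efull n} (hx0 : ‖x0.1‖ < 9/16) (ht0 : 0 ≤ gap σ c h x0) (htδ : gap σ c h x0 ≤ δ x0.1)
    {θ : ℝ} (hθ : θ = 1 ∨ θ = -1) :
    - (θ * (u x0 - φ x0.1)) ≤
      2 * sideConst n κ C0 C1 * gapSlope ε M φ ψ x0.1 * gap σ c h x0 := by
  set p0 := ε + ‖x0.1‖ ^ 2 with hp0
  set q0 := |φ x0.1 - ψ x0.1| with hq0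
  set K := gapSlope ε M φ ψ x0.1 with hK
  set A := sideConst n κ C0 C1 with hA
  have hKe : K = q0 / p0 + M := rfl
  have hnR : (2:ℝ) ≤ n := by exact_mod_cast hn
  have hp0p : 0 < p0 := by positivity
  have hp01 : p0 < 1 := by
    have := norm_nonneg x0.1; nlinarith
  have hq0n : 0 ≤ q0 := abs_nonneg _
  have hKM : M ≤ K := by
    have : 0 ≤ q0 / p0 := by positivity
    linarith
  have hKp : 0 < K := hM.trans_le hKM
  have hC0p : 0 < C0 := by linarith
  have hA1 : 4 * C0 * (33 * n * (C1 + 1)) ≤ A := by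
    have : 0 ≤ (C1 + 1) * (2 * n * κ) := by positivity
    rw [hA]; unfold sideConst; linarith
  have hA2 : (C1 + 1) * (2 * n * κ) ≤ A := by
    have : 0 ≤ 4 * C0 * (33 * n * (C1 + 1)) := by positivity
    rw [hA]; unfold sideConst; linarith
  have hA3 : 4 * C0 ≤ A := by
    refine le_trans ?_ hA1
    refine le_mul_of_one_le_right (by positivity) ?_
    nlinarith
  have hAp : 0 < A := by linarith
  set a := A * K with ha
  have hap : 0 < a := by positivity
  set τ0 : ℝ := 1 / (2 * n * κ) with hτ0
  have hτ0p : 0 < τ0 := by positivity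
  -- the value `|u - φ|` is at most `(C1 + 1) M` everywhere in the relevant region
  have huφ : ∀ x : Efull n, ‖x.1‖ < 3/4 → 0 ≤ gap σ c h x → gap σ c h x ≤ δ x.1 →
      - (θ * (u x - φ x.1)) ≤ (C1 + 1) * M := by
    intro x h1 h2 h3
    have b1 := abs_le.1 (S.bd x h1 h2 h3)
    have b2 := abs_le.1 (S.hφ.b0 x.1 (by linarith))
    rcases hθ with rfl | rfl <;> linarith [b1.1, b1.2, b2.1, b2.2]
  have hτ0M : (C1 + 1) * M ≤ a * τ0 := by
    have : (C1 + 1) * (2 * n * κ) * M ≤ a := mul_le_mul hA2 hKM hM.le hAp.le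
    calc (C1 + 1) * M = ((C1 + 1) * (2 * n * κ) * M) * τ0 := by rw [hτ0]; field_simp
      _ ≤ a * τ0 := by gcongr
  set τ := min (4 * C0 * p0) τ0 with hτ
  have hτp : 0 < τ := lt_min (by positivity) hτ0p
  have hτle : τ ≤ 4 * C0 * p0 := min_le_left _ _
  have hτκ : 2 * n * κ * τ ≤ 1 := by
    calc 2 * n * κ * τ ≤ 2 * n * κ * τ0 := by gcongr; exact min_le_right _ _
      _ = 1 := by rw [hτ0]; field_simp
  by_cases hbig : τ < gap σ c h x0
  · have hτe : τ = τ0 := by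
      rcases min_choice (4 * C0 * p0) τ0 with h' | h'
      · exfalso
        have h'' : τ = 4 * C0 * p0 := h'
        have := (S.comp x0.1 (by linarith)).2
        have h5 : 0 < C0 * p0 := by positivity
        rw [← hp0] at this
        linarith
      · exact h'
    calc _ ≤ (C1 + 1) * M := huφ x0 (by linarith) ht0 htδ
      _ ≤ a * τ0 := hτ0M
      _ ≤ a * gap σ c h x0 := by gcongr; linarith
      _ ≤ 2 * A * K * gap σ c h x0 := by rw [ha]; nlinarith [mul_nonneg hap.le ht0]
  push Not at hbig
  set s := √p0 / 4 with hs
  have hsp : 0 < s := by positivity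
  have hs2 : 16 * s ^ 2 = p0 := by
    rw [hs, div_pow, Real.sq_sqrt hp0p.le]; ring
  have near : ∀ y : Ep n, ‖y - x0.1‖ ≤ s → ‖y‖ < 3/4 ∧ p0 / 4 ≤ ε + ‖y‖ ^ 2 ∧
      ε + ‖y‖ ^ 2 ≤ 3 * p0 := fun y hy => near_facts hε hε1 hx0 hsp hs2 hy
  set b := 16 * (C1 + 1) * M / p0 with hb
  have hbp : 0 < b := by positivity
  set Kc : Set (Efull n) := {x | ‖x.1 - x0.1‖ ≤ s ∧ 0 ≤ gap σ c h x ∧ gap σ c h x ≤ τ ∧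
    gap σ c h x ≤ δ x.1} with hKc
  set D : Set (Efull n) := {x | ‖x.1 - x0.1‖ < s ∧ 0 < gap σ c h x ∧ gap σ c h x < τ ∧
    gap σ c h x < δ x.1} with hD
  have hcyl1 : ∀ x : Efull n, ‖x.1 - x0.1‖ ≤ s → ‖x.1‖ < 1 := fun x hx => by
    linarith [(near x.1 hx).1]
  have hgapc := gap_cont (σ := σ) (c := c) S.hh
  have hδc : ContinuousOn (fun x : Efull n => δ x.1) {x | ‖x.1‖ ≤ 1} :=
    S.hδ.comp continuousOn_fst fun x hx => by simpa using hx
  have hpairc : ContinuousOn (fun x : Efull n => (gap σ c h x, δ x.1 - gap σ c h x))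
      {x | ‖x.1‖ ≤ 1} := hgapc.prodMk (hδc.sub hgapc)
  have hfc : Continuous fun x : Efull n => ‖x.1 - x0.1‖ := by fun_prop
  have hKcomp : IsCompact Kc := by
    set B := |c| + κ + τ
    have hcomp : IsCompact ((closedBall x0.1 s ×ˢ Set.Icc (-B) B : Set (Efull n))) :=
      (isCompact_closedBall _ _).prod isCompact_Icc
    refine hcomp.of_isClosed_subset ?_ ?_
    · have hcl : IsClosed {x : Efull n | ‖x.1 - x0.1‖ ≤ s} := isClosed_le hfc continuous_const
      have hcs : {x : Efull n | ‖x.1 - x0.1‖ ≤ s} ⊆ {x | ‖x.1‖ ≤ 1} := fun x hx => (hcyl1 x hx).le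
      have := (hpairc.mono hcs).preimage_isClosed_of_isClosed hcl
        ((isClosed_Icc (a := (0:ℝ)) (b := τ)).prod (isClosed_Ici (a := (0:ℝ))))
      convert! this using 1
      ext x
      simp [hKc, and_assoc]
    · rintro x ⟨h1, h2, h3, h4⟩
      refine ⟨by simpa [dist_eq_norm] using h1, ?_⟩
      have b1 := abs_le.1 (S.hh.b0 x.1 (hcyl1 x h1).le)
      have b2 := neg_abs_le c
      have b3 := le_abs_self c
      unfold gap at h2 h3
      rcases S.sgn with hh | hh <;> rw [hh] at h2 h3 <;> constructor <;>
        simp only [B] <;> linarith [b1.1, b1.2]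
  have hDo : IsOpen D := by
    have hcl : IsOpen {x : Efull n | ‖x.1 - x0.1‖ < s} := isOpen_lt hfc continuous_const
    have hcs : {x : Efull n | ‖x.1 - x0.1‖ < s} ⊆ {x | ‖x.1‖ ≤ 1} := fun x hx =>
      (hcyl1 x (le_of_lt hx)).le
    have := (hpairc.mono hcs).isOpen_inter_preimage hcl
      ((isOpen_Ioo (a := (0:ℝ)) (b := τ)).prod (isOpen_Ioi (a := (0:ℝ))))
    convert! this using 1
    ext x
    simp [hD, and_assoc]
  have hDK : D ⊆ Kc := fun x hx => ⟨hx.1.le, hx.2.1.le, hx.2.2.1.le, hx.2.2.2.le⟩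
  set w : Efull n → ℝ := fun y => a / τ * (gap σ c h y * (2 * τ - gap σ c h y)) +
    b * ‖y.1 - x0.1‖ ^ 2 + θ * (u y + (-1) * φ y.1) with hw
  have hKsub : Kc ⊆ {x : Efull n | ‖x.1‖ ≤ 1} := fun x hx => (hcyl1 x hx.1).le
  have hwc : ContinuousOn w Kc := by
    have k1 := hgapc.mono hKsub
    have k2 : ContinuousOn u Kc := S.cont.mono fun x hx => ⟨hcyl1 x hx.1, hx.2.1, hx.2.2.2⟩
    have k3 : ContinuousOn (fun x : Efull n => φ x.1) Kc :=
      S.hφ.cont.comp continuousOn_fst fun x hx => by simpa using hKsub hx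
    exact ((continuousOn_const.mul (k1.mul (continuousOn_const.sub k1))).add
      (continuousOn_const.mul (hfc.pow 2).continuousOn)).add
      (continuousOn_const.mul (k2.add (continuousOn_const.mul k3)))
  have hbar : ∀ x ∈ D, ContDiffAt ℝ 2 w x ∧ lapl n w x ≤ - a / τ + 2 * n * b + n * M := by
    rintro x ⟨h1, h2, h3, h4⟩
    have hx1 := hcyl1 x h1.le
    exact lapl_barrier hn S.sgn S.hh S.hφ hx1 (S.cd x hx1 h2 h4) (S.harm x hx1 h2 h4) hθ hap.le
      hbp.le hτp hτκ h2.le h3.le x0.1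
  have hneg : - a / τ + 2 * n * b + n * M < 0 := by
    have e1 : a / (4 * C0 * p0) ≤ a / τ := by gcongr
    have e2 : 33 * n * (C1 + 1) * M / p0 ≤ a / (4 * C0 * p0) := by
      rw [div_le_div_iff₀ hp0p (by positivity)]
      have : 4 * C0 * (33 * n * (C1 + 1)) * M ≤ a := mul_le_mul hA1 hKM hM.le hAp.le
      calc _ = (4 * C0 * (33 * n * (C1 + 1)) * M) * p0 := by ring
        _ ≤ a * p0 := by gcongr
    have e3 : 2 * n * b = 32 * n * (C1 + 1) * M / p0 := by rw [hb]; ring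
    have e4 : n * M < n * (C1 + 1) * M / p0 := by
      rw [lt_div_iff₀ hp0p]
      have : 0 < n * M := by positivity
      have h7 : n * M * p0 < n * M * 1 := by gcongr
      nlinarith
    have e5 : 33 * n * (C1 + 1) * M / p0 = 32 * n * (C1 + 1) * M / p0 + n * (C1 + 1) * M / p0 := by
      ring
    have e6 : - a / τ = -(a / τ) := by ring
    rw [e6]; linarith
  -- for `0 ≤ t ≤ τ` the first barrier term dominates `a t`
  have hfirst : ∀ x ∈ Kc, a * gap σ c h x ≤ a / τ * (gap σ c h x * (2 * τ - gap σ c h x)) := by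
    rintro x ⟨-, h2, h3, -⟩
    calc a * gap σ c h x = a / τ * (gap σ c h x * τ) := by field_simp
      _ ≤ _ := by gcongr; linarith
  have hbdry : ∀ x ∈ Kc, x ∉ D → 0 ≤ w x := by
    intro x hx hxD
    have hf := hfirst x hx
    obtain ⟨h1, h2, h3, h4⟩ := hx
    have hx34 := near x.1 h1
    have hwx : w x = a / τ * (gap σ c h x * (2 * τ - gap σ c h x)) +
      b * ‖x.1 - x0.1‖ ^ 2 + θ * (u x - φ x.1) := by rw [hw]; ring
    have hbr : 0 ≤ b * ‖x.1 - x0.1‖ ^ 2 := by positivity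
    have hat : 0 ≤ a * gap σ c h x := by positivity
    have hu1 := huφ x hx34.1 h2 h4
    rcases h1.lt_or_eq with h1' | h1'
    swap
    · have : b * ‖x.1 - x0.1‖ ^ 2 = (C1 + 1) * M := by
        rw [h1', hb]
        have : s ^ 2 = p0 / 16 := by linarith
        rw [this]; field_simp
      linarith
    rcases h2.lt_or_eq with h2' | h2'
    swap
    · have : u x = φ x.1 := S.bv0 x (hcyl1 x h1).le h2'.symm
      rw [this, sub_self, mul_zero] at hwx
      linarith
    rcases h4.lt_or_eq with h4' | h4'
    swap
    · have hux : u x = ψ x.1 := S.bv1 x (hcyl1 x h1).le h4'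
      have hx01 : ‖x0.1‖ < 1 := by linarith
      have l1 := abs_le.1 (S.hφ.lip (hcyl1 x h1) hx01)
      have l2 := abs_le.1 (S.hψ.lip (hcyl1 x h1) hx01)
      have l3 := abs_le.1 (le_refl q0)
      set r := ‖x.1 - x0.1‖ with hr
      have m1 : - (θ * (u x - φ x.1)) ≤ q0 + 2 * M * r := by
        rw [hux]
        rcases hθ with rfl | rfl <;> linarith [l1.1, l1.2, l2.1, l2.2, l3.1, l3.2]
      have m2 : 2 * M * r ≤ M * p0 + b * r ^ 2 := by
        have m3 : M / p0 * r ^ 2 ≤ b * r ^ 2 := by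
          have : M / p0 ≤ b := by
            rw [hb]; gcongr; linarith [mul_nonneg hC1 hM.le]
          gcongr
        have m4 : 2 * M * r ≤ M * p0 + M / p0 * r ^ 2 := by
          have : M * p0 + M / p0 * r ^ 2 - 2 * M * r = M / p0 * (p0 - r) ^ 2 := by
            field_simp; ring
          have h9 : 0 ≤ M / p0 * (p0 - r) ^ 2 := by positivity
          linarith
        linarith
      have m5 : q0 + M * p0 ≤ a * gap σ c h x := by
        rw [h4']
        have m6 : p0 / (4 * C0) ≤ δ x.1 := by
          refine le_trans ?_ (S.comp x.1 (hcyl1 x h1).le).1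
          rw [← div_div]; gcongr; exact hx34.2.1
        calc q0 + M * p0 = K * p0 := by rw [hKe]; field_simp
          _ = (4 * C0) * K * (p0 / (4 * C0)) := by field_simp
          _ ≤ A * K * δ x.1 := by gcongr
      linarith
    have h3' : gap σ c h x = τ := by
      by_contra hne
      exact hxD ⟨h1', h2', lt_of_le_of_ne h3 hne, h4'⟩
    have hτe : τ = τ0 := by
      rcases min_choice (4 * C0 * p0) τ0 with h' | h'
      · exfalso
        have h'' : τ = 4 * C0 * p0 := h'
        have := (S.comp x.1 (hcyl1 x h1).le).2
        have h5 : C0 * (ε + ‖x.1‖ ^ 2) ≤ C0 * (3 * p0) := by gcongr; exact hx34.2.2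
        have h6 : 0 < C0 * p0 := by positivity
        linarith
      · exact h'
    rw [h3', hτe] at hf
    rw [h3', hτe] at hwx
    linarith
  have hx0K : x0 ∈ Kc := ⟨by simpa using hsp.le, ht0, hbig, htδ⟩
  have hfin := min_principle hKcomp hDo hDK hwc (fun x hx => (hbar x hx).1)
    (fun x hx => (hbar x hx).2.trans_lt hneg) hbdry x0 hx0K
  have hw0 : w x0 = a / τ * (gap σ c h x0 * (2 * τ - gap σ c h x0)) + θ * (u x0 - φ x0.1) := by
    simp only [hw, sub_self, norm_zero]; ring
  have hup : a / τ * (gap σ c h x0 * (2 * τ - gap σ c h x0)) ≤ 2 * A * K * gap σ c h x0 := by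
    calc _ ≤ a / τ * (gap σ c h x0 * (2 * τ)) := by gcongr; linarith
      _ = 2 * A * K * gap σ c h x0 := by rw [ha]; field_simp
  linarith

/-- Linear growth away from the boundary: `|u - φ| ≤ C (|φ - ψ|/(ε + |x'|²) + M) t`, where `t` is
the vertical distance to the graph carrying the datum `φ`. -/
lemma side_bound (hn : 2 ≤ n) (hκ : 0 < κ) (hC0 : 1 ≤ C0) (hε : 0 < ε) (hε1 : ε < 1/16)
    (hM : 0 < M) (hC1 : 0 ≤ C1) (S : Side n σ c κ C0 ε M C1 h δ φ ψ u)
    {x : Efull n} (hx : ‖x.1‖ < 9/16) (ht0 : 0 ≤ gap σ c h x) (htδ : gap σ c h x ≤ δ x.1) :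
    |u x - φ x.1| ≤ 2 * sideConst n κ C0 C1 * gapSlope ε M φ ψ x.1 * gap σ c h x := by
  have h1 := side_bound_aux hn hκ hC0 hε hε1 hM hC1 S hx ht0 htδ (Or.inl rfl)
  have h2 := side_bound_aux hn hκ hC0 hε hε1 hM hC1 S hx ht0 htδ (Or.inr rfl)
  rw [abs_le]
  constructor <;> linarith

end SideBound

/-! ### The gradient near one boundary graph -/

section GradientBound

variable {n : ℕ}

/-- The constant in `grad_side`. -/
def finalConst (n : ℕ) (κ C0 C1 : ℝ) : ℝ :=
  gradConst n * (12 * sideConst n κ C0 C1 * (2 * (1 + 3 * κ) + 16 * C0) + 1)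

variable {σ c κ C0 ε M C1 : ℝ} {h δ φ ψ : Ep n → ℝ} {u : Efull n → ℝ}

/-- Gradient bound at a point lying at least as close to the graph carrying `φ` as to the other
one: the interior gradient estimate on a ball of radius comparable to the distance `t` to that
graph, where `u - φ(x₀')` is of size `t` times `gapSlope`. -/
lemma grad_side (hn : 2 ≤ n) (hκ : 0 < κ) (hC0 : 1 ≤ C0) (hε : 0 < ε) (hε1 : ε < 1/16)
    (hM : 0 < M) (hC1 : 0 ≤ C1) (S : Side n σ c κ C0 ε M C1 h δ φ ψ u)
    {x0 : Efull n} (hx0 : ‖x0.1‖ < 1/2) (ht0 : 0 < gap σ c h x0)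
    (htδ : 2 * gap σ c h x0 ≤ δ x0.1) :
    ‖fderiv ℝ u x0‖ ≤ finalConst n κ C0 C1 * gapSlope ε M φ ψ x0.1 := by
  set p0 := ε + ‖x0.1‖ ^ 2 with hp0
  set q0 := |φ x0.1 - ψ x0.1| with hq0
  set K := gapSlope ε M φ ψ x0.1 with hK
  set A := sideConst n κ C0 C1 with hA
  set t := gap σ c h x0 with ht
  set Λ := 2 * (1 + 3 * κ) + 16 * C0 with hΛ
  have hKe : K = q0 / p0 + M := rfl
  have hp0p : 0 < p0 := by positivity
  have hp01 : p0 < 1 := by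
    have := norm_nonneg x0.1; nlinarith
  have hq0n : 0 ≤ q0 := abs_nonneg _
  have hKM : M ≤ K := by
    have : 0 ≤ q0 / p0 := by positivity
    linarith
  have hKp : 0 < K := hM.trans_le hKM
  have hC0p : 0 < C0 := by linarith
  have hΛp : 0 < Λ := by positivity
  have hA0 : 0 ≤ A := by rw [hA]; unfold sideConst; positivity
  set R := t / Λ with hR
  have hRp : 0 < R := by positivity
  have htR : t = Λ * R := by rw [hR]; field_simp
  have hx01 : ‖x0.1‖ < 1 := by linarith
  have hRp0 : R ≤ p0 / 16 := by
    have h1 : t ≤ C0 * p0 := by linarith [(S.comp x0.1 hx01.le).2]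
    have h2 : 16 * C0 * R ≤ Λ * R := by
      gcongr; rw [hΛ]; linarith
    have h3 : C0 * (16 * R) ≤ C0 * p0 := by linarith
    have := le_of_mul_le_mul_left h3 hC0p
    linarith
  have hRt : (1 + 3 * κ) * R ≤ t / 2 := by
    have h2 : 2 * (1 + 3 * κ) * R ≤ Λ * R := by
      gcongr; rw [hΛ]; linarith
    linarith
  set s := √p0 / 4 with hs
  have hsp : 0 < s := by positivity
  have hs2 : 16 * s ^ 2 = p0 := by
    rw [hs, div_pow, Real.sq_sqrt hp0p.le]; ring
  have hRs : R ≤ s := by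
    have : p0 ≤ √p0 := by
      apply Real.le_sqrt_of_sq_le; nlinarith
    rw [hs]; linarith
  have hball : ∀ y ∈ ball x0 R, ‖y.1 - x0.1‖ ≤ R ∧ ‖y.1‖ < 9/16 ∧ |gap σ c h y - t| ≤ t / 2 ∧
      gap σ c h y < δ y.1 := by
    intro y hy
    rw [mem_ball, dist_eq_norm] at hy
    have h1 : ‖y.1 - x0.1‖ ≤ R := (norm_fst_le (y - x0)).trans hy.le
    have h2 : |y.2 - x0.2| ≤ R := (norm_snd_le (y - x0)).trans hy.le
    have h3 : ‖y.1‖ < 9/16 := by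
      have := norm_sub_norm_le y.1 x0.1; linarith
    have h4 := S.hh.lip (show ‖y.1‖ < 1 by linarith) hx01
    have h5 := S.lip y.1 x0.1 (by linarith) hx01
    have h6 : κ * ‖y.1 - x0.1‖ ≤ κ * R := by gcongr
    have h7 : |gap σ c h y - t| ≤ (1 + κ) * R := by
      rw [abs_le] at h2 h4 ⊢
      rw [ht]; unfold gap
      rcases S.sgn with hh | hh <;> rw [hh] <;> constructor <;> linarith [h2.1, h2.2, h4.1, h4.2]
    have h8 : 0 < κ * R := by positivity
    refine ⟨h1, h3, by linarith, ?_⟩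
    have := (abs_le.1 h7).2
    have := (abs_le.1 h5).1
    linarith
  have hmain : ∀ y ∈ ball x0 R, |u y - φ x0.1| ≤ (12 * A * Λ + 1) * K * R := by
    intro y hy
    obtain ⟨h1, h2, h3, h4⟩ := hball y hy
    have h3' := abs_le.1 h3
    have hy1 : ‖y.1‖ < 1 := by linarith
    obtain ⟨-, hn1, -⟩ := near_facts hε hε1 (show ‖x0.1‖ < 9/16 by linarith) hsp hs2 (h1.trans hRs)
    have hb := side_bound hn hκ hC0 hε hε1 hM hC1 S h2 (by linarith) h4.le
    have l1 := S.hφ.lip hy1 hx01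
    have l2 := S.hψ.lip hy1 hx01
    have hMR : M * ‖y.1 - x0.1‖ ≤ M * R := by gcongr
    have hq : |φ y.1 - ψ y.1| ≤ q0 + 2 * (M * R) := by
      have e1 := abs_le.1 l1
      have e2 := abs_le.1 l2
      have e3 := abs_le.1 (le_refl q0)
      rw [abs_le]
      constructor <;> linarith [e1.1, e1.2, e2.1, e2.2, e3.1, e3.2]
    have hKy : gapSlope ε M φ ψ y.1 ≤ 4 * K := by
      have hMRp : M * R ≤ M * (p0 / 16) := by gcongr
      have : |φ y.1 - ψ y.1| / (ε + ‖y.1‖ ^ 2) ≤ (q0 + M * p0 / 8) / (p0 / 4) :=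
        div_le_div₀ (by positivity) (by linarith) (by positivity) hn1
      have e : (q0 + M * p0 / 8) / (p0 / 4) = 4 * (q0 / p0) + M / 2 := by
        field_simp; ring
      unfold gapSlope
      rw [hKe]
      linarith
    have hKy0 : 0 ≤ gapSlope ε M φ ψ y.1 := by unfold gapSlope; positivity
    have hb2 : |u y - φ y.1| ≤ 12 * A * K * t := by
      refine hb.trans ?_
      calc 2 * A * gapSlope ε M φ ψ y.1 * gap σ c h y ≤ 2 * A * (4 * K) * (3 / 2 * t) := by
            have : gap σ c h y ≤ 3 / 2 * t := by linarith [h3'.2]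
            gcongr
            linarith [h3'.1]
        _ = _ := by ring
    have hKR : M * R ≤ K * R := by gcongr
    calc |u y - φ x0.1| = |(u y - φ y.1) + (φ y.1 - φ x0.1)| := by ring_nf
      _ ≤ |u y - φ y.1| + |φ y.1 - φ x0.1| := abs_add_le _ _
      _ ≤ 12 * A * K * t + K * R := by linarith
      _ = (12 * A * Λ + 1) * K * R := by rw [htR]; ring
  have hg := grad_est hn hRp (f := u) (x0 := x0) (c := φ x0.1)
    (fun y hy => by
      obtain ⟨h1, h2, h3, h4⟩ := hball y hy
      exact S.cd y (by linarith) (by linarith [(abs_le.1 h3).1]) h4)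
    (fun y hy => by
      obtain ⟨h1, h2, h3, h4⟩ := hball y hy
      exact S.harm y (by linarith) (by linarith [(abs_le.1 h3).1]) h4) hmain
  refine hg.trans (le_of_eq ?_)
  unfold finalConst
  rw [← hA, ← hΛ]
  field_simp

end GradientBound

/-! ### Combination of the two sides -/

section Conclusion

variable {n : ℕ} {ε : ℝ} {h1 h2 : Ep n → ℝ}

lemma supConst_nonneg (n : ℕ) : 0 ≤ supConst n := Real.sqrt_nonneg _

/-- Two-sided form of `sup_bound`, with the boundary and interior contributions merged. -/
lemma abs_bound (hn : 2 ≤ n) {u : Efull n → ℝ} {φ ψ : Ep n → ℝ} {Φ Ψ η : ℝ}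
    (hc1 : ContinuousOn h1 (closedBall 0 1)) (hc2 : ContinuousOn h2 (closedBall 0 1))
    (hφ : ∀ y : Ep n, ‖y‖ ≤ 1 → |φ y| ≤ Φ) (hψ : ∀ y : Ep n, ‖y‖ ≤ 1 → |ψ y| ≤ Ψ)
    (hΦ : 0 ≤ Φ) (hΨ : 0 ≤ Ψ) (hη : 0 < η) (hu : HarmBV n ε h1 h2 u φ ψ)
    {x : Efull n} (hx : x ∈ Omega n ε h1 h2 (3/4)) :
    |u x| ≤ (2 + supConst n) *
      (Φ + Ψ + (∫ y in Omega n ε h1 h2 1, ‖u y‖ ^ 2) ^ ((1:ℝ)/2) + η) := by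
  obtain ⟨hcd, hl, hi, hc, hb⟩ := hu
  have hΩ := Omega_open (ε := ε) hc1 hc2
  have hi2 : IntegrableOn (fun x => ‖u x‖ ^ 2) (Omega n ε h1 h2 1) := by
    refine Integrable.mono' hi ?_ ?_
    · exact (hcd.continuousOn.norm.pow 2).aestronglyMeasurable hΩ.measurableSet
    · refine Eventually.of_forall fun x => ?_
      rw [Real.norm_of_nonneg (by positivity)]
      exact le_add_of_nonneg_right (by positivity)
  set L := (∫ y in Omega n ε h1 h2 1, ‖u y‖ ^ 2) ^ ((1:ℝ)/2) with hL
  have hL0 : 0 ≤ L := by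
    refine Real.rpow_nonneg (integral_nonneg fun x => by positivity) _
  have hs := supConst_nonneg n
  have hup := sup_bound hn hc1 hc2 hcd hl hc (add_nonneg hΦ hΨ) (fun y hy => by
    have e1 := abs_le.1 (hφ y hy)
    have e2 := abs_le.1 (hψ y hy)
    rw [(hb y hy).1, (hb y hy).2]
    constructor <;> linarith [e1.2, e2.2]) hi2 hη hx
  have hdn := sup_bound (u := fun x => - u x) hn hc1 hc2 hcd.neg
    (fun x hx => by
      rw [lapl_neg (hcd.contDiffAt (hΩ.mem_nhds hx)), hl x hx, neg_zero]) hc.neg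
    (add_nonneg hΦ hΨ) (fun y hy => by
      have e1 := abs_le.1 (hφ y hy)
      have e2 := abs_le.1 (hψ y hy)
      rw [(hb y hy).1, (hb y hy).2]
      constructor <;> linarith [e1.1, e2.1]) (by simpa only [norm_neg] using hi2) hη hx
  simp only [norm_neg] at hdn
  rw [← hL] at hup hdn
  have hf : Φ + Ψ + 2 * η + supConst n * L ≤ (2 + supConst n) * (Φ + Ψ + L + η) := by
    nlinarith [mul_nonneg hs hΦ, mul_nonneg hs hΨ, mul_nonneg hs hη.le]
  rw [abs_le]
  constructor <;> linarith

/-- Both boundary graphs, with their data, form a `Side`. -/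
lemma both_sides {κ C0 M C1 : ℝ} {u : Efull n → ℝ} {φ ψ : Ep n → ℝ}
    (hh1 : C2le n h1 κ) (hh2 : C2le n h2 κ) (hδ : DeltaComp n ε C0 h1 h2)
    (hφ : C2le n φ M) (hψ : C2le n ψ M) (hM : 0 ≤ M) (hC1 : 1 ≤ C1)
    (hu : HarmBV n ε h1 h2 u φ ψ)
    (hbd : ∀ x ∈ Omega n ε h1 h2 (3/4), |u x| ≤ C1 * M) :
    Side n 1 (ε/2) κ C0 ε M C1 h1 (fun y => ε + h1 y - h2 y) φ ψ u ∧
    Side n (-1) (-ε/2) κ C0 ε M C1 h2 (fun y => ε + h1 y - h2 y) ψ φ u := by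
  obtain ⟨hcd, hl, hi, hc, hb⟩ := hu
  have hΩ := Omega_open (ε := ε) hh1.cont hh2.cont
  have hδc : ContinuousOn (fun y => ε + h1 y - h2 y) (closedBall 0 1) :=
    (continuousOn_const.add hh1.cont).sub hh2.cont
  have hlip : ∀ y z : Ep n, ‖y‖ < 1 → ‖z‖ < 1 →
      |(ε + h1 y - h2 y) - (ε + h1 z - h2 z)| ≤ 2 * κ * ‖y - z‖ := by
    intro y z hy hz
    have e1 := abs_le.1 (hh1.lip hy hz)
    have e2 := abs_le.1 (hh2.lip hy hz)
    rw [abs_le]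
    constructor <;> linarith [e1.1, e1.2, e2.1, e2.2]
  have hbt : ∀ x : Efull n, ‖x.1‖ ≤ 1 → x.2 = ε/2 + h1 x.1 → u x = φ x.1 := fun x hx he => by
    rw [← (hb x.1 hx).1, ← he]
  have hbb : ∀ x : Efull n, ‖x.1‖ ≤ 1 → x.2 = -ε/2 + h2 x.1 → u x = ψ x.1 := fun x hx he => by
    rw [← (hb x.1 hx).2, ← he]
  have hmem : ∀ (x : Efull n) (r : ℝ), ‖x.1‖ < r → -ε/2 + h2 x.1 ≤ x.2 → x.2 ≤ ε/2 + h1 x.1 →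
      x ∈ Omega n ε h1 h2 r ∨ x.2 = ε/2 + h1 x.1 ∨ x.2 = -ε/2 + h2 x.1 := by
    intro x r hr ha hb
    rcases ha.lt_or_eq with ha' | ha'
    · rcases hb.lt_or_eq with hb' | hb'
      · exact Or.inl ⟨hr, ha', hb'⟩
      · exact Or.inr (Or.inl hb')
    · exact Or.inr (Or.inr ha'.symm)
  have hMC : M ≤ C1 * M := le_mul_of_one_le_left hM hC1
  have hbd' : ∀ x : Efull n, ‖x.1‖ < 3/4 → -ε/2 + h2 x.1 ≤ x.2 → x.2 ≤ ε/2 + h1 x.1 →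
      |u x| ≤ C1 * M := by
    intro x hx ha hb
    have hx1 : ‖x.1‖ ≤ 1 := by linarith
    rcases hmem x _ hx ha hb with h | h | h
    · exact hbd x h
    · rw [hbt x hx1 h]; exact (hφ.b0 _ hx1).trans hMC
    · rw [hbb x hx1 h]; exact (hψ.b0 _ hx1).trans hMC
  have hcS : ∀ x : Efull n, ‖x.1‖ < 1 → -ε/2 + h2 x.1 ≤ x.2 → x.2 ≤ ε/2 + h1 x.1 →
      x ∈ Omega n ε h1 h2 1 ∪ Gammap n ε h1 1 ∪ Gammam n ε h2 1 := by
    intro x hx ha hb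
    rcases hmem x _ hx ha hb with h | h | h
    · exact Or.inl (Or.inl h)
    · exact Or.inl (Or.inr ⟨hx.le, h⟩)
    · exact Or.inr ⟨hx.le, h⟩
  have hcd' : ∀ x ∈ Omega n ε h1 h2 1, ContDiffAt ℝ 2 u x := fun x hx =>
    hcd.contDiffAt (hΩ.mem_nhds hx)
  constructor
  · exact
    { sgn := Or.inl rfl
      hh := hh1
      hδ := hδc
      lip := hlip
      comp := hδ
      cd := fun x hx a b => hcd' x ⟨hx, by unfold gap at b; linarith, by unfold gap at a; linarith⟩
      harm := fun x hx a b => hl x ⟨hx, by unfold gap at b; linarith, by unfold gap at a; linarith⟩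
      cont := hc.mono fun x ⟨hx, a, b⟩ =>
        hcS x hx (by unfold gap at b; linarith) (by unfold gap at a; linarith)
      bv0 := fun x hx a => hbt x hx (by unfold gap at a; linarith)
      bv1 := fun x hx a => hbb x hx (by unfold gap at a; linarith)
      hφ := hφ
      hψ := hψ
      bd := fun x hx a b =>
        hbd' x hx (by unfold gap at b; linarith) (by unfold gap at a; linarith) }
  · exact
    { sgn := Or.inr rfl
      hh := hh2
      hδ := hδc
      lip := hlip
      comp := hδ
      cd := fun x hx a b => hcd' x ⟨hx, by unfold gap at a; linarith, by unfold gap at b; linarith⟩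
      harm := fun x hx a b => hl x ⟨hx, by unfold gap at a; linarith, by unfold gap at b; linarith⟩
      cont := hc.mono fun x ⟨hx, a, b⟩ =>
        hcS x hx (by unfold gap at a; linarith) (by unfold gap at b; linarith)
      bv0 := fun x hx a => hbb x hx (by unfold gap at a; linarith)
      bv1 := fun x hx a => hbt x hx (by unfold gap at a; linarith)
      hφ := hψ
      hψ := hφ
      bd := fun x hx a b =>
        hbd' x hx (by unfold gap at a; linarith) (by unfold gap at b; linarith) }

lemma finalConst_nonneg (n : ℕ) {κ C0 C1 : ℝ} (hκ : 0 ≤ κ) (hC0 : 0 ≤ C0) (hC1 : 0 ≤ C1) :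
    0 ≤ finalConst n κ C0 C1 := by
  have := gradConst_nonneg n
  unfold finalConst sideConst
  positivity

end Conclusion

theorem stmt3 (n : ℕ) (hn : 2 ≤ n) (κ0 κ1 C₀ : ℝ)
    (hκ0 : 0 < κ0) (hκ1 : 0 < κ1) (hC₀ : 1 ≤ C₀) :
    ∃ ε₀ ∈ Set.Ioo (0:ℝ) 1, ∃ C : ℝ, 0 < C ∧
    ∀ ε ∈ Set.Ioo (0:ℝ) ε₀, ∀ h1 h2 : Ep n → ℝ,
      HGeom n ε κ0 κ1 h1 h2 → DeltaComp n ε C₀ h1 h2 →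
    ∀ (u : Efull n → ℝ) (φ ψ : Ep n → ℝ),
      ContDiffOn ℝ 2 φ (closedBall 0 1) → ContDiffOn ℝ 2 ψ (closedBall 0 1) →
      HarmBV n ε h1 h2 u φ ψ →
    ∀ x ∈ Omega n ε h1 h2 (1/2),
      ‖fderiv ℝ u x‖ ≤
        C * |φ x.1 - ψ x.1| / (ε + ‖x.1‖^2) +
        C * (C2norm n φ + C2norm n ψ +
          (∫ y in Omega n ε h1 h2 1, ‖u y‖^2) ^ ((1:ℝ)/2)) := by
  have hs := supConst_nonneg n
  set C1 := 2 + supConst n with hC1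
  set F := finalConst n κ1 C₀ C1 with hF
  have hF0 : 0 ≤ F := finalConst_nonneg n hκ1.le (by linarith) (by linarith)
  refine ⟨1/16, ⟨by norm_num, by norm_num⟩, F + 1, by linarith, ?_⟩
  rintro ε ⟨hε, hε1⟩ h1 h2 ⟨hc1, hc2, -, -, -, -, -, -, hκ⟩ hδ u φ ψ hφ hψ hu x hx
  have hh1 : C2le n h1 κ1 := C2le_of hc1 (by linarith [C2norm_nonneg h2])
  have hh2 : C2le n h2 κ1 := C2le_of hc2 (by linarith [C2norm_nonneg h1])
  set L := (∫ y in Omega n ε h1 h2 1, ‖u y‖ ^ 2) ^ ((1:ℝ)/2) with hL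
  have hL0 : 0 ≤ L := Real.rpow_nonneg (integral_nonneg fun x => by positivity) _
  have hΦ := C2norm_nonneg φ
  have hΨ := C2norm_nonneg ψ
  set X := C2norm n φ + C2norm n ψ + L with hX
  set q := |φ x.1 - ψ x.1| / (ε + ‖x.1‖ ^ 2) with hq
  have hq0 : 0 ≤ q := by positivity
  -- `M = X + η` has to be positive for the barrier argument, so `η` is removed by a limit
  have key : ∀ η > 0, ‖fderiv ℝ u x‖ ≤ F * (q + (X + η)) := by
    intro η hη
    have hM : 0 < X + η := by linarith
    obtain ⟨S1, S2⟩ := both_sides hh1 hh2 hδ (C2le_of hφ (show _ ≤ X + η by linarith))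
      (C2le_of hψ (show _ ≤ X + η by linarith)) hM.le (show 1 ≤ C1 by linarith) hu
      (fun y hy => abs_bound hn hc1.continuousOn hc2.continuousOn
        (fun y hy => (C2le_of hφ le_rfl).b0 y hy) (fun y hy => (C2le_of hψ le_rfl).b0 y hy)
        hΦ hΨ hη hu hy)
    obtain ⟨hx1, hx2, hx3⟩ := hx
    rcases le_total (2 * gap 1 (ε/2) h1 x) (ε + h1 x.1 - h2 x.1) with hle | hle
    · exact grad_side hn hκ1 hC₀ hε hε1 hM (by linarith) S1 hx1 (by unfold gap; linarith) hle
    · have := grad_side hn hκ1 hC₀ hε hε1 hM (by linarith) S2 hx1 (by unfold gap; linarith)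
        (by unfold gap at hle ⊢; linarith)
      unfold gapSlope at this
      rwa [abs_sub_comm] at this
  have hlim : ‖fderiv ℝ u x‖ ≤ F * (q + X) := by
    refine le_of_forall_pos_le_add fun e he => ?_
    have hF1 : 0 < F + 1 := by linarith
    refine (key (e / (F + 1)) (by positivity)).trans ?_
    have : F * (e / (F + 1)) ≤ e := by
      rw [mul_div_assoc', div_le_iff₀ hF1]; nlinarith
    linarith
  have hfin : (F + 1) * |φ x.1 - ψ x.1| / (ε + ‖x.1‖ ^ 2) = (F + 1) * q := by rw [hq]; ring
  rw [hfin]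
  have : 0 ≤ X := by linarith
  linarith
end
end

section
/- There exists a constant C > 0, depending only on C₀, such that the following fiberwise Poincaré inequality holds: for every x₀ = (x₀', x₀,n) ∈ Ω_{1/2}, every s ∈ (0, 1/2], and every function w : Ω₁ → ℝ^m that is C¹ on Ω₁, extends continuously to each closed vertical fiber with w(x', −ε/2 + h2(x')) = 0 for |x'| < 1/2 (i.e., w vanishes on the bottom boundary Γ⁻), and for which |w|² and |∇w|² are integrable on Ω̂_s(x₀), one has ∫_{Ω̂_s(x₀)} |w(x)|² dx ≤ C ∫_{Ω̂_s(x₀)} (ε + |x'|²)² |∇w(x)|² dx. -/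
/-!
The inequality holds with `C = C₀²`, by a one-dimensional Poincaré inequality on each vertical
fiber followed by Tonelli. On a fiber `(a, b)` of length `δ(x')`, the function `g = w(x', ·)`
vanishes at `a`, so `|g(t)| ≤ ∫ |g'|`, and Cauchy–Schwarz gives `∫ |g|² ≤ δ(x')² ∫ |g'|²`
(`poincare_fiber`). Then `δ(x') ≤ C₀ (ε + |x'|²)`, and `|g'| ≤ |∇w|` because the vertical
direction is a unit vector. Working with lower integrals avoids discussing integrability on
individual fibers; `lintegral_OmegaHat_le` integrates the fiber inequality over `x'`.
-/

open MeasureTheory Metric Finset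

noncomputable section

/-- Fundamental theorem of calculus as an inequality of lower integrals, with no integrability
assumption on the derivative. -/
lemma enorm_le_lintegral_fiber {F : Type*} [NormedAddCommGroup F] [NormedSpace ℝ F]
    [CompleteSpace F] {g g' : ℝ → F} {a b : ℝ} (hc : ContinuousOn g (Set.Icc a b))
    (hd : ∀ t ∈ Set.Ioo a b, HasDerivAt g (g' t) t) (hc' : ContinuousOn g' (Set.Ioo a b))
    (h0 : g a = 0) {t : ℝ} (ht : t ∈ Set.Ioo a b) :
    ‖g t‖ₑ ≤ ∫⁻ τ in Set.Ioo a b, ‖g' τ‖ₑ := by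
  by_cases hfin : ∫⁻ τ in Set.Ioo a b, ‖g' τ‖ₑ = ⊤
  · rw [hfin]; exact le_top
  have hint : IntegrableOn g' (Set.Ioo a b) :=
    ⟨hc'.aestronglyMeasurable measurableSet_Ioo, lt_top_iff_ne_top.mpr hfin⟩
  have hsub : Set.Ioc a t ⊆ Set.Ioo a b := fun τ hτ => ⟨hτ.1, hτ.2.trans_lt ht.2⟩
  have hii : IntervalIntegrable g' volume a t :=
    (intervalIntegrable_iff_integrableOn_Ioc_of_le ht.1.le).mpr (hint.mono_set hsub)
  have hftc := intervalIntegral.integral_eq_sub_of_hasDerivAt_of_le ht.1.le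
    (hc.mono (Set.Icc_subset_Icc_right ht.2.le))
    (fun τ hτ => hd τ ⟨hτ.1, hτ.2.trans ht.2⟩) hii
  rw [h0, sub_zero, intervalIntegral.integral_of_le ht.1.le] at hftc
  rw [← hftc]
  exact (enorm_integral_le_lintegral_enorm _).trans (lintegral_mono_set hsub)

/-- Cauchy–Schwarz against the constant function `1`. -/
lemma sq_lintegral_le {α : Type*} [MeasurableSpace α] (μ : Measure α) {f : α → ENNReal}
    (hf : AEMeasurable f μ) :
    (∫⁻ x, f x ∂μ) ^ 2 ≤ μ Set.univ * ∫⁻ x, f x ^ 2 ∂μ := by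
  have h := ENNReal.lintegral_mul_le_Lp_mul_Lq μ Real.HolderConjugate.two_two hf
    (aemeasurable_const (b := (1 : ENNReal)))
  simp only [Pi.mul_apply, mul_one, ENNReal.rpow_two, one_pow, lintegral_const, one_mul] at h
  have hsq : ∀ A : ENNReal, (A ^ (1 / 2 : ℝ)) ^ 2 = A := fun A => by
    rw [← ENNReal.rpow_two, ← ENNReal.rpow_mul]; norm_num
  calc (∫⁻ x, f x ∂μ) ^ 2
      ≤ ((∫⁻ x, f x ^ 2 ∂μ) ^ (1 / 2 : ℝ) * (μ Set.univ) ^ (1 / 2 : ℝ)) ^ 2 := by gcongr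
    _ = μ Set.univ * ∫⁻ x, f x ^ 2 ∂μ := by rw [mul_pow, hsq, hsq, mul_comm]

/-- One-dimensional Poincaré inequality on `(a, b)` for functions vanishing at `a`. -/
lemma poincare_fiber {F : Type*} [NormedAddCommGroup F] [NormedSpace ℝ F]
    [CompleteSpace F] {g g' : ℝ → F} {a b : ℝ} (hc : ContinuousOn g (Set.Icc a b))
    (hd : ∀ t ∈ Set.Ioo a b, HasDerivAt g (g' t) t) (hc' : ContinuousOn g' (Set.Ioo a b))
    (h0 : g a = 0) :
    ∫⁻ t in Set.Ioo a b, ‖g t‖ₑ ^ 2 ≤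
      ENNReal.ofReal (b - a) ^ 2 * ∫⁻ t in Set.Ioo a b, ‖g' t‖ₑ ^ 2 := by
  have hm : AEMeasurable (fun t => ‖g' t‖ₑ) (volume.restrict (Set.Ioo a b)) :=
    (hc'.aestronglyMeasurable measurableSet_Ioo).enorm
  have hcs := sq_lintegral_le _ hm
  rw [Measure.restrict_apply_univ, Real.volume_Ioo] at hcs
  calc ∫⁻ t in Set.Ioo a b, ‖g t‖ₑ ^ 2
      ≤ ∫⁻ _ in Set.Ioo a b, (∫⁻ τ in Set.Ioo a b, ‖g' τ‖ₑ) ^ 2 := by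
        refine setLIntegral_mono' measurableSet_Ioo fun t ht => ?_
        have := enorm_le_lintegral_fiber hc hd hc' h0 ht
        gcongr
    _ = (∫⁻ τ in Set.Ioo a b, ‖g' τ‖ₑ) ^ 2 * ENNReal.ofReal (b - a) := by
        rw [setLIntegral_const, Real.volume_Ioo]
    _ ≤ (ENNReal.ofReal (b - a) * ∫⁻ t in Set.Ioo a b, ‖g' t‖ₑ ^ 2) *
          ENNReal.ofReal (b - a) := by gcongr
    _ = _ := by ring

lemma isOpen_Omega {n : ℕ} {ε : ℝ} {h1 h2 : Ep n → ℝ} (hc1 : ContinuousOn h1 (closedBall 0 1))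
    (hc2 : ContinuousOn h2 (closedBall 0 1)) {r : ℝ} (hr : r ≤ 1) :
    IsOpen (Omega n ε h1 h2 r) := by
  have hU : IsOpen {x : Efull n | ‖x.1‖ < r} :=
    isOpen_lt (by fun_prop) continuous_const
  have hmap : Set.MapsTo (fun x : Efull n => x.1) {x : Efull n | ‖x.1‖ < r} (closedBall 0 1) :=
    fun x hx => by
      have hx' : ‖x.1‖ < r := hx
      simpa using (hx'.trans_le hr).le
  have k1 : ContinuousOn (fun x : Efull n => x.2 - h1 x.1) {x : Efull n | ‖x.1‖ < r} :=
    continuous_snd.continuousOn.sub (hc1.comp continuous_fst.continuousOn hmap)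
  have k2 : ContinuousOn (fun x : Efull n => x.2 - h2 x.1) {x : Efull n | ‖x.1‖ < r} :=
    continuous_snd.continuousOn.sub (hc2.comp continuous_fst.continuousOn hmap)
  convert (k2.isOpen_inter_preimage hU (isOpen_Ioi (a := -ε / 2))).inter
    (k1.isOpen_inter_preimage hU (isOpen_Iio (a := ε / 2))) using 1
  ext x
  simp only [Omega, Set.mem_ofPred_eq, Set.mem_inter_iff, Set.mem_preimage, Set.mem_Ioi,
    Set.mem_Iio, lt_sub_iff_add_lt, sub_lt_iff_lt_add]
  tauto

/-- Tonelli for `Ω̂_s(x₀)`: an integral inequality holds as soon as it holds on every vertical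
fiber. -/
lemma lintegral_OmegaHat_le {n : ℕ} {ε : ℝ} {h1 h2 : Ep n → ℝ} {x₀ : Efull n} {s : ℝ}
    (hD : MeasurableSet (OmegaHat n ε h1 h2 x₀ s)) {f k : Efull n → ENNReal}
    (hf : AEMeasurable f (volume.restrict (OmegaHat n ε h1 h2 x₀ s)))
    (hk : AEMeasurable k (volume.restrict (OmegaHat n ε h1 h2 x₀ s)))
    (hfib : ∀ y : Ep n, ‖y‖ < 1 / 2 →
      ∫⁻ t in Set.Ioo (-ε/2 + h2 y) (ε/2 + h1 y), f (y, t) ≤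
        ∫⁻ t in Set.Ioo (-ε/2 + h2 y) (ε/2 + h1 y), k (y, t)) :
    ∫⁻ x in OmegaHat n ε h1 h2 x₀ s, f x ≤ ∫⁻ x in OmegaHat n ε h1 h2 x₀ s, k x := by
  rw [← lintegral_indicator hD, ← lintegral_indicator hD, Measure.volume_eq_prod,
    lintegral_prod _ ((aemeasurable_indicator_iff hD).mpr hf),
    lintegral_prod _ ((aemeasurable_indicator_iff hD).mpr hk)]
  refine lintegral_mono fun y => ?_
  by_cases hy : ‖y‖ < 1 / 2 ∧ ‖y - x₀.1‖ < s
  · have key : ∀ F : Efull n → ENNReal,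
        ∫⁻ t, (OmegaHat n ε h1 h2 x₀ s).indicator F (y, t) =
          ∫⁻ t in Set.Ioo (-ε/2 + h2 y) (ε/2 + h1 y), F (y, t) := fun F => by
      rw [← lintegral_indicator measurableSet_Ioo]
      refine lintegral_congr fun t => ?_
      simp [Set.indicator, OmegaHat, Omega, hy.2, show ‖y‖ < 2⁻¹ by simpa using hy.1]
    simpa only [key] using hfib y hy.1
  · have hout : ∀ t, (y, t) ∉ OmegaHat n ε h1 h2 x₀ s := fun t ht => hy ⟨ht.1.1, ht.2⟩
    simp [hout]

theorem stmt11 (C₀ : ℝ) (hC₀ : 1 ≤ C₀) :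
    ∃ C : ℝ, 0 < C ∧
      ∀ n : ℕ, 2 ≤ n → ∀ κ0 κ1 : ℝ, 0 < κ0 → 0 < κ1 →
      ∀ ε ∈ Set.Ioo (0:ℝ) 1, ∀ h1 h2 : Ep n → ℝ,
        HGeom n ε κ0 κ1 h1 h2 → DeltaComp n ε C₀ h1 h2 →
      ∀ m : ℕ, 1 ≤ m →
      ∀ x₀ ∈ Omega n ε h1 h2 (1/2), ∀ s ∈ Set.Ioc (0:ℝ) (1/2),
      ∀ w : Efull n → EuclideanSpace ℝ (Fin m),
        ContDiffOn ℝ 1 w (Omega n ε h1 h2 1) →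
        (∀ y : Ep n, ‖y‖ < 1/2 →
          ContinuousOn (fun t => w (y, t)) (Set.Icc (-ε/2 + h2 y) (ε/2 + h1 y)) ∧
          w (y, -ε/2 + h2 y) = 0) →
        IntegrableOn (fun x => ‖w x‖^2) (OmegaHat n ε h1 h2 x₀ s) →
        IntegrableOn (fun x => ‖fderiv ℝ w x‖^2) (OmegaHat n ε h1 h2 x₀ s) →
        (∫ x in OmegaHat n ε h1 h2 x₀ s, ‖w x‖^2) ≤
          C * ∫ x in OmegaHat n ε h1 h2 x₀ s, (ε + ‖x.1‖^2)^2 * ‖fderiv ℝ w x‖^2 := by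
  refine ⟨C₀ ^ 2, by positivity, ?_⟩
  intro n _ κ0 κ1 _ _ ε hε h1 h2 hG hδ m _ x₀ _ s _ w hw hbd hi1 hi2
  obtain ⟨hc1, hc2, -⟩ := hG
  have hO1 : IsOpen (Omega n ε h1 h2 1) :=
    isOpen_Omega hc1.continuousOn hc2.continuousOn le_rfl
  have hD : MeasurableSet (OmegaHat n ε h1 h2 x₀ s) := by
    refine (IsOpen.inter (isOpen_Omega hc1.continuousOn hc2.continuousOn (r := 1/2) (by norm_num))
      (?_ : IsOpen {x : Efull n | ‖x.1 - x₀.1‖ < s})).measurableSet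
    exact isOpen_lt (by fun_prop) continuous_const
  have hwt : Continuous fun x : Efull n => (ε + ‖x.1‖ ^ 2) ^ 2 := by fun_prop
  -- The weight is at most `(1 + 1)² = 4` on the domain, so the right-hand integrand is integrable.
  have hi3 : IntegrableOn (fun x => (ε + ‖x.1‖ ^ 2) ^ 2 * ‖fderiv ℝ w x‖ ^ 2)
      (OmegaHat n ε h1 h2 x₀ s) := by
    refine Integrable.bdd_mul hi2 (c := 4) hwt.aestronglyMeasurable ?_
    filter_upwards [ae_restrict_mem hD] with x hx
    have hx1 : ‖x.1‖ < 1 / 2 := hx.1.1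
    rw [Real.norm_of_nonneg (by positivity)]
    have h1' : ε + ‖x.1‖ ^ 2 ≤ 2 := by nlinarith [norm_nonneg x.1, hε.2]
    have h0' : 0 ≤ ε + ‖x.1‖ ^ 2 := by have := hε.1; positivity
    nlinarith
  rw [← integral_const_mul]
  have hi4 := hi3.const_mul (C₀ ^ 2)
  rw [← ENNReal.ofReal_le_ofReal_iff (integral_nonneg fun x => by positivity),
    ofReal_integral_eq_lintegral_ofReal hi1 (ae_of_all _ fun x => by positivity),
    ofReal_integral_eq_lintegral_ofReal hi4 (ae_of_all _ fun x => by positivity)]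
  refine lintegral_OmegaHat_le hD hi1.aemeasurable.ennreal_ofReal
    hi4.aemeasurable.ennreal_ofReal fun y hy => ?_
  have hmem : ∀ t ∈ Set.Ioo (-ε/2 + h2 y) (ε/2 + h1 y), (y, t) ∈ Omega n ε h1 h2 1 :=
    fun t ht => ⟨show ‖y‖ < 1 by linarith, ht.1, ht.2⟩
  have hline : ∀ t : ℝ, HasDerivAt (fun τ : ℝ => ((y, τ) : Efull n)) (0, 1) t :=
    fun t => (hasDerivAt_const t y).prodMk (hasDerivAt_id t)
  have hd : ∀ t ∈ Set.Ioo (-ε/2 + h2 y) (ε/2 + h1 y),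
      HasDerivAt (fun τ => w (y, τ)) (fderiv ℝ w (y, t) (0, 1)) t := fun t ht =>
    (((hw.differentiableOn one_ne_zero).differentiableAt
      (hO1.mem_nhds (hmem t ht))).hasFDerivAt).comp_hasDerivAt t (hline t)
  have hc' : ContinuousOn (fun t => fderiv ℝ w (y, t) (0, 1))
      (Set.Ioo (-ε/2 + h2 y) (ε/2 + h1 y)) := by
    have := (hw.continuousOn_fderiv_of_isOpen hO1 le_rfl).comp
      (f := fun t : ℝ => ((y, t) : Efull n)) (by fun_prop) hmem
    exact this.clm_apply continuousOn_const
  have hP := poincare_fiber (hbd y hy).1 hd hc' (hbd y hy).2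
  have hδy := (hδ y (by linarith)).2
  have hA : 0 ≤ C₀ * (ε + ‖y‖ ^ 2) := by have := hε.1; positivity
  have hsq : ∀ v : EuclideanSpace ℝ (Fin m), ENNReal.ofReal (‖v‖ ^ 2) = ‖v‖ₑ ^ 2 := fun v => by
    rw [ENNReal.ofReal_pow (norm_nonneg _), ofReal_norm]
  calc ∫⁻ t in Set.Ioo (-ε/2 + h2 y) (ε/2 + h1 y), ENNReal.ofReal (‖w (y, t)‖ ^ 2)
      = ∫⁻ t in Set.Ioo (-ε/2 + h2 y) (ε/2 + h1 y), ‖w (y, t)‖ₑ ^ 2 := by simp only [hsq]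
    _ ≤ _ := hP
    _ ≤ ENNReal.ofReal (C₀ * (ε + ‖y‖ ^ 2)) ^ 2 *
        ∫⁻ t in Set.Ioo (-ε/2 + h2 y) (ε/2 + h1 y), ‖fderiv ℝ w (y, t) (0, 1)‖ₑ ^ 2 := by
        gcongr
        linarith
    _ = ∫⁻ t in Set.Ioo (-ε/2 + h2 y) (ε/2 + h1 y), ENNReal.ofReal
          ((C₀ * (ε + ‖y‖ ^ 2)) ^ 2 * ‖fderiv ℝ w (y, t) (0, 1)‖ ^ 2) := by
        rw [← lintegral_const_mul' _ _ (by finiteness)]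
        refine lintegral_congr fun t => ?_
        rw [ENNReal.ofReal_mul (pow_nonneg hA 2), ENNReal.ofReal_pow hA, hsq]
    _ ≤ _ := by
        refine lintegral_mono fun t => ENNReal.ofReal_le_ofReal ?_
        -- In the sup norm of the product, the vertical unit vector has norm `1`.
        have hv : ‖fderiv ℝ w (y, t) (0, 1)‖ ≤ ‖fderiv ℝ w (y, t)‖ := by
          simpa using (fderiv ℝ w (y, t)).le_opNorm (0, 1)
        calc (C₀ * (ε + ‖y‖ ^ 2)) ^ 2 * ‖fderiv ℝ w (y, t) (0, 1)‖ ^ 2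
            ≤ (C₀ * (ε + ‖y‖ ^ 2)) ^ 2 * ‖fderiv ℝ w (y, t)‖ ^ 2 := by gcongr
          _ = _ := by ring
end
end
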